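/- arXiv:2307.04623 — 10 statements merged into one kernel-verified Lean document; each statement's English description precedes it below -/
import Mathlib

section
/- Let X be a compact metric space, Y a metric space, and f : X → Y a continuous map such that every point of X has an open neighborhood on which f is injective. Let a ∈ X, and for each n ∈ ℕ let Γ_n : [0,1] → Y and I_n : [0,1] → X be continuous maps with f ∘ I_n = Γ_n and I_n(0) = a. If the sequence Γ_n converges uniformly on [0,1] to a map Γ_0 : [0,1] → Y, then the sequence I_n converges uniformly on [0,1] to a continuous map I_0 : [0,1] → X satisfying f ∘ I_0 = Γ_0 and I_0(0) = a. -/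
/-!
By a Lebesgue number argument there is a scale `r > 0` below which `f` separates distinct points, so
by compactness, for each `0 < ε ≤ r`, the images of two points at distance exactly `ε` are at
distance at least some `η > 0` (`exists_pos_le_dist_of_dist_eq`). When `Γ m` and `Γ n` are
`η`-close, the continuous function `t ↦ dist (I m t) (I n t)`, which vanishes at `0`, can then never
take the value `ε`, so it stays below `ε` by the intermediate value theorem
(`dist_lt_of_dist_comp_lt`). Hence the lifts are uniformly Cauchy, and the compact space `X` is
complete.
-/

open Filter

/-- A locally injective map on a compact metric space is injective at a uniform scale. -/
lemma exists_pos_injective_scale {X Y : Type*} [MetricSpace X] [CompactSpace X]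
    (f : X → Y) (hloc : ∀ x : X, ∃ U : Set X, IsOpen U ∧ x ∈ U ∧ Set.InjOn f U) :
    ∃ r > 0, ∀ x y : X, dist x y ≤ r → f x = f y → x = y := by
  choose U hUo hxU hUinj using hloc
  obtain ⟨δ, hδ, h⟩ := lebesgue_number_lemma_of_metric (isCompact_univ (X := X)) hUo
    (fun x _ => Set.mem_iUnion.2 ⟨x, hxU x⟩)
  refine ⟨δ / 2, half_pos hδ, fun x y hxy hfxy => ?_⟩
  obtain ⟨i, hi⟩ := h x (Set.mem_univ x)
  refine hUinj i (hi (Metric.mem_ball_self hδ)) (hi ?_) hfxy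
  rw [Metric.mem_ball, dist_comm]
  linarith

lemma exists_pos_le_dist_of_dist_eq {X Y : Type*} [MetricSpace X] [CompactSpace X] [MetricSpace Y]
    (f : X → Y) (hf : Continuous f) {r ε : ℝ}
    (hr : ∀ x y : X, dist x y ≤ r → f x = f y → x = y) (hε : 0 < ε) (hεr : ε ≤ r) :
    ∃ η > 0, ∀ x y : X, dist x y = ε → η ≤ dist (f x) (f y) := by
  have hK : IsCompact {p : X × X | dist p.1 p.2 = ε} :=
    (isClosed_eq (by fun_prop) continuous_const).isCompact
  have hpos : ∀ p ∈ {p : X × X | dist p.1 p.2 = ε}, 0 < dist (f p.1) (f p.2) := by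
    intro p hp
    refine dist_pos.2 fun heq => hε.ne' ?_
    have hp' : dist p.1 p.2 = ε := hp
    rw [← hp', hr p.1 p.2 (hp'.trans_le hεr) heq, dist_self]
  have hcont : Continuous fun p : X × X => dist (f p.1) (f p.2) := by fun_prop
  obtain ⟨η, hη, h⟩ := hK.exists_forall_le' hcont.continuousOn hpos
  exact ⟨η, hη, fun x y hxy => h (x, y) hxy⟩

/-- Two paths from the same point with `η`-close images stay `ε`-close: their distance cannot cross
the level `ε`. -/
lemma dist_lt_of_dist_comp_lt {X Y : Type*} [MetricSpace X] [MetricSpace Y] {f : X → Y} {ε η : ℝ}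
    (hε : 0 < ε) (hη : ∀ x y : X, dist x y = ε → η ≤ dist (f x) (f y))
    {p q : unitInterval → X} (hp : Continuous p) (hq : Continuous q) (h0 : p 0 = q 0)
    (hpq : ∀ t, dist (f (p t)) (f (q t)) < η) (t : unitInterval) : dist (p t) (q t) < ε := by
  by_contra! ht
  obtain ⟨s, hs⟩ := mem_range_of_exists_le_of_exists_ge (hp.dist hq)
    ⟨0, by rw [h0, dist_self]; exact hε.le⟩ ⟨t, ht⟩
  exact (hη _ _ hs).not_gt (hpq s)

/-- **Limit of lifts (Lemma `cov-3`).** Let `X` be a compact metric space, `Y` a metric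
space, and `f : X → Y` continuous and locally injective.  If paths `Γ n` in `Y` converge
uniformly to `Γ0` and each `Γ n` has an `f`-lift `I n` starting at `a`, then the lifts
converge uniformly to a continuous `f`-lift `I0` of `Γ0` starting at `a`. -/
theorem stmt_2 {X Y : Type*} [MetricSpace X] [CompactSpace X] [MetricSpace Y]
    (f : X → Y) (hf : Continuous f)
    (hloc : ∀ x : X, ∃ U : Set X, IsOpen U ∧ x ∈ U ∧ Set.InjOn f U)
    (a : X) (Γ : ℕ → unitInterval → Y) (I : ℕ → unitInterval → X)
    (hΓcont : ∀ n, Continuous (Γ n)) (hIcont : ∀ n, Continuous (I n))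
    (hlift : ∀ n, f ∘ I n = Γ n) (hinit : ∀ n, I n 0 = a)
    (Γ0 : unitInterval → Y) (hconv : TendstoUniformly Γ Γ0 atTop) :
    ∃ I0 : unitInterval → X, Continuous I0 ∧ TendstoUniformly I I0 atTop ∧
      f ∘ I0 = Γ0 ∧ I0 0 = a := by
  obtain ⟨r, hr0, hr⟩ := exists_pos_injective_scale f hloc
  have hfI : ∀ n t, f (I n t) = Γ n t := fun n t => congrFun (hlift n) t
  have hcauchy : UniformCauchySeqOn I atTop Set.univ := by
    rw [Metric.uniformCauchySeqOn_iff]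
    intro ε hε
    -- The separation estimate is only available up to the scale `r`.
    have hε' : 0 < min ε r := lt_min hε hr0
    obtain ⟨η, hη0, hη⟩ := exists_pos_le_dist_of_dist_eq f hf hr hε' (min_le_right ε r)
    have hΓ := Metric.tendstoUniformly_iff.1 hconv (η / 2) (half_pos hη0)
    obtain ⟨N, hN⟩ := eventually_atTop.1 hΓ
    refine ⟨N, fun m hm n hn t _ => lt_of_lt_of_le ?_ (min_le_left ε r)⟩
    refine dist_lt_of_dist_comp_lt hε' hη (hIcont m) (hIcont n)
      ((hinit m).trans (hinit n).symm) (fun s => ?_) t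
    rw [hfI, hfI]
    linarith [dist_triangle_left (Γ m s) (Γ n s) (Γ0 s), hN m hm s, hN n hn s]
  choose I0 hI0 using fun t => cauchySeq_tendsto_of_complete (hcauchy.cauchySeq (Set.mem_univ t))
  have hunif : TendstoUniformly I I0 atTop :=
    tendstoUniformlyOn_univ.1 (hcauchy.tendstoUniformlyOn_of_tendsto fun t _ => hI0 t)
  refine ⟨I0, hunif.continuous (Frequently.of_forall hIcont), hunif, ?_, ?_⟩
  · funext t
    have h1 : Tendsto (fun n => Γ n t) atTop (nhds (f (I0 t))) := by
      simpa only [Function.comp_def, hfI] using (hf.tendsto (I0 t)).comp (hI0 t)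
    exact tendsto_nhds_unique h1 (hconv.tendsto_at t)
  · refine tendsto_nhds_unique (hI0 0) ?_
    simp only [hinit]
    exact tendsto_const_nhds
end

section
/- For all real numbers a > 0 and θ ∈ (0, π/2), ∫_0^θ (4·a·sin θ)/(sin²θ + a²·sin²x) dx = (4a/√(sin²θ + a²)) · arctan(√(sin²θ + a²)/cos θ). -/
open Real

/-!
On `[0, θ] ⊆ (-π/2, π/2)` the function `F x = (4a/S) · arctan (S · tan x / sin θ)`, with
`S = √(sin² θ + a²)`, is an antiderivative of the integrand: its derivative is
`4 a sin θ / (sin² θ cos² x + S² sin² x)`, and the denominator equals `sin² θ + a² sin² x`.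
Since `F 0 = 0` and `tan θ / sin θ = 1 / cos θ`, the fundamental theorem of calculus concludes.
-/

/-- **Perimeter integral of the spherical lens (Lemma `mid`).** -/
theorem stmt_3 (a θ : ℝ) (ha : 0 < a) (hθ : θ ∈ Set.Ioo 0 (π / 2)) :
    ∫ x in (0:ℝ)..θ, (4 * a * Real.sin θ) / (Real.sin θ ^ 2 + a ^ 2 * Real.sin x ^ 2)
      = (4 * a / Real.sqrt (Real.sin θ ^ 2 + a ^ 2)) *
          Real.arctan (Real.sqrt (Real.sin θ ^ 2 + a ^ 2) / Real.cos θ) := by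
  obtain ⟨h0, h1⟩ := hθ
  have hs : 0 < Real.sin θ := Real.sin_pos_of_pos_of_lt_pi h0 (by linarith)
  have hc : 0 < Real.cos θ := Real.cos_pos_of_mem_Ioo ⟨by linarith, h1⟩
  have hS2 : Real.sqrt (Real.sin θ ^ 2 + a ^ 2) ^ 2 = Real.sin θ ^ 2 + a ^ 2 :=
    Real.sq_sqrt (by positivity)
  have hS : 0 < Real.sqrt (Real.sin θ ^ 2 + a ^ 2) := Real.sqrt_pos.mpr (by positivity)
  set S := Real.sqrt (Real.sin θ ^ 2 + a ^ 2)
  have hden : ∀ x, 0 < Real.sin θ ^ 2 + a ^ 2 * Real.sin x ^ 2 := fun x => by positivity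
  have hderiv : ∀ x ∈ Set.uIcc 0 θ,
      HasDerivAt (fun x => 4 * a / S * Real.arctan (S * Real.tan x / Real.sin θ))
        ((4 * a * Real.sin θ) / (Real.sin θ ^ 2 + a ^ 2 * Real.sin x ^ 2)) x := by
    intro x hx
    rw [Set.uIcc_of_le h0.le] at hx
    have hcx : 0 < Real.cos x :=
      Real.cos_pos_of_mem_Ioo ⟨by linarith [hx.1], by linarith [hx.2]⟩
    have h := ((((Real.hasDerivAt_tan hcx.ne').const_mul S).div_const
      (Real.sin θ)).arctan).const_mul (4 * a / S)
    refine h.congr_deriv ?_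
    have hd : Real.sin θ ^ 2 + a ^ 2 * Real.sin x ^ 2
        = Real.sin θ ^ 2 * Real.cos x ^ 2 + S ^ 2 * Real.sin x ^ 2 := by
      rw [hS2]
      linear_combination -(Real.sin θ ^ 2) * Real.sin_sq_add_cos_sq x
    have hpos : 0 < Real.sin θ ^ 2 * Real.cos x ^ 2 + S ^ 2 * Real.sin x ^ 2 := by positivity
    have he : 1 + (S * Real.tan x / Real.sin θ) ^ 2
        = (Real.sin θ ^ 2 * Real.cos x ^ 2 + S ^ 2 * Real.sin x ^ 2)
          / (Real.sin θ ^ 2 * Real.cos x ^ 2) := by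
      rw [Real.tan_eq_sin_div_cos]
      field_simp
    rw [hd, he]
    field_simp
  have hint : IntervalIntegrable
      (fun x => (4 * a * Real.sin θ) / (Real.sin θ ^ 2 + a ^ 2 * Real.sin x ^ 2))
      MeasureTheory.volume 0 θ :=
    (Continuous.div (by fun_prop) (by fun_prop) fun x => (hden x).ne').intervalIntegrable _ _
  have hend : S * Real.tan θ / Real.sin θ = S / Real.cos θ := by
    rw [Real.tan_eq_sin_div_cos]
    field_simp
  rw [intervalIntegral.integral_eq_sub_of_hasDerivAt hderiv hint, hend]
  simp
end

section
/- For all real numbers a > 0 and θ ∈ (0, π/2), ∫_0^θ (4·a²·sin²x)/(sin²θ + a²·sin²x) dx = 4θ − (4·sin θ/√(sin²θ + a²)) · arctan(√(sin²θ + a²)/cos θ). -/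
/-!
The integrand equals `4 - 4 s² / (s² + a² sin² x)` with `s = sin θ > 0`. Dividing numerator and
denominator of the last fraction by `cos² x` turns the denominator into `s² + R² tan² x`, where
`R² = s² + a²`, so an antiderivative on `(-π/2, π/2)` is `4 x - (4 s / R) arctan ((R / s) tan x)`.
At `x = θ` the argument of the arctangent is `R / cos θ`, and at `x = 0` the antiderivative
vanishes.
-/

open Real

lemma hasDerivAt_lensPrimitive {a s R x : ℝ} (hs : 0 < s) (hR : 0 < R) (hR2 : R ^ 2 = s ^ 2 + a ^ 2)
    (hx : 0 < cos x) :
    HasDerivAt (fun y => 4 * y - (4 * s / R) * arctan ((R / s) * tan y))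
      ((4 * a ^ 2 * sin x ^ 2) / (s ^ 2 + a ^ 2 * sin x ^ 2)) x := by
  have h := ((hasDerivAt_id x).const_mul 4).sub
    ((((hasDerivAt_tan hx.ne').const_mul (R / s)).arctan).const_mul (4 * s / R))
  refine h.congr_deriv ?_
  have hden : s ^ 2 + a ^ 2 * sin x ^ 2 ≠ 0 := by positivity
  have hden' : s ^ 2 * cos x ^ 2 + R ^ 2 * sin x ^ 2 = s ^ 2 + a ^ 2 * sin x ^ 2 := by
    rw [hR2, cos_sq']; ring
  have harg : 1 + (R / s * tan x) ^ 2 =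
      (s ^ 2 + a ^ 2 * sin x ^ 2) / (s ^ 2 * cos x ^ 2) := by
    rw [← hden', tan_eq_sin_div_cos]
    field_simp
  rw [harg]
  field_simp
  ring

theorem stmt_4 (a θ : ℝ) (ha : 0 < a) (hθ : θ ∈ Set.Ioo 0 (π / 2)) :
    ∫ x in (0:ℝ)..θ, (4 * a ^ 2 * Real.sin x ^ 2) / (Real.sin θ ^ 2 + a ^ 2 * Real.sin x ^ 2)
      = 4 * θ - (4 * Real.sin θ / Real.sqrt (Real.sin θ ^ 2 + a ^ 2)) *
          Real.arctan (Real.sqrt (Real.sin θ ^ 2 + a ^ 2) / Real.cos θ) := by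
  obtain ⟨h0, h1⟩ := hθ
  have hs : 0 < sin θ := sin_pos_of_pos_of_lt_pi h0 (by linarith)
  have hR : 0 < √(sin θ ^ 2 + a ^ 2) := by positivity
  have hR2 : √(sin θ ^ 2 + a ^ 2) ^ 2 = sin θ ^ 2 + a ^ 2 := sq_sqrt (by positivity)
  rw [intervalIntegral.integral_eq_sub_of_hasDerivAt
    (f := fun y => 4 * y - (4 * sin θ / √(sin θ ^ 2 + a ^ 2)) *
      arctan ((√(sin θ ^ 2 + a ^ 2) / sin θ) * tan y))]
  · have harg : √(sin θ ^ 2 + a ^ 2) / sin θ * tan θ = √(sin θ ^ 2 + a ^ 2) / cos θ := by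
      rw [tan_eq_sin_div_cos]
      field_simp
    simp [harg]
  · intro x hx
    rw [Set.uIcc_of_le h0.le] at hx
    exact hasDerivAt_lensPrimitive hs hR hR2
      (cos_pos_of_mem_Ioo ⟨by linarith [hx.1], by linarith [hx.2]⟩)
  · refine Continuous.intervalIntegrable (Continuous.div (by fun_prop) (by fun_prop) ?_) _ _
    intro x
    positivity
end

section
/- Let q ≥ 3 be an integer, let A_0 be a real number, and let δ ∈ (0,π). Define, for θ ∈ [0, π/2), Φ(θ) = √(sin²θ + tan²(δ/2)) and h(θ) = ((A_0/4 + (q−2)·θ)·Φ(θ))/(tan(δ/2)·arctan(Φ(θ)/cos θ)) − (q−2)·sin θ/tan(δ/2). Then there exists θ_0 ∈ (0, π/2) such that h is strictly increasing on the interval [0, θ_0]. -/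
/-!
Write `t = tan (δ/2)`, `Φ θ = √(sin² θ + t²)` and `c = q - 2 > 0`. Both `Φ` and `Φ / cos` have
derivative `0` at `θ = 0`, where `arctan (Φ / cos)` equals `arctan t = δ/2`. Hence only the linear
term `c θ` and `sin θ` contribute to the derivative of `h` at `0`, which is
`c (2/δ - 1/t)`; it is positive because `δ/2 < tan (δ/2)` on `(0, π)`. All the functions involved
are strictly differentiable at `0`, and a function with a positive strict derivative at a point is
strictly increasing near that point (`exists_strictMonoOn_of_hasStrictDerivAt`).
-/

open Real

lemma exists_strictMonoOn_of_hasStrictDerivAt {f : ℝ → ℝ} {f' a : ℝ}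
    (hf : HasStrictDerivAt f f' a) (hf' : 0 < f') :
    ∃ ε > 0, StrictMonoOn f (Metric.ball a ε) := by
  have h := hf.hasStrictFDerivAt.isLittleO.def (half_pos hf')
  obtain ⟨ε, hε, hball⟩ := Metric.eventually_nhds_iff_ball.1 h
  refine ⟨ε, hε, fun x hx y hy hxy => ?_⟩
  have hb := hball (y, x) (by rw [← ball_prod_same]; exact ⟨hy, hx⟩)
  simp only [ContinuousLinearMap.toSpanSingleton_apply, smul_eq_mul, Real.norm_eq_abs,
    abs_of_pos (sub_pos.2 hxy)] at hb
  have := (abs_le.1 hb).1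
  nlinarith [mul_pos hf' (sub_pos.2 hxy)]

/-- **Lemma `must-strict-con`.** For `q ≥ 3`, any real `A₀`, and `δ ∈ (0,π)`, the
function `h(θ) = ((A₀/4 + (q−2)θ)·Φ(θ))/(tan(δ/2)·arctan(Φ(θ)/cos θ)) − (q−2)sin θ/tan(δ/2)`,
where `Φ(θ) = √(sin²θ + tan²(δ/2))`, is strictly increasing on some interval `[0, θ₀]`
with `θ₀ ∈ (0, π/2)`. -/
theorem stmt_7 (q : ℕ) (hq : 3 ≤ q) (A0 δ : ℝ) (hδ : δ ∈ Set.Ioo 0 π) :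
    ∃ θ0 ∈ Set.Ioo 0 (π / 2),
      StrictMonoOn
        (fun θ : ℝ =>
          ((A0 / 4 + ((q : ℝ) - 2) * θ) * Real.sqrt (Real.sin θ ^ 2 + Real.tan (δ / 2) ^ 2)) /
            (Real.tan (δ / 2) *
              Real.arctan (Real.sqrt (Real.sin θ ^ 2 + Real.tan (δ / 2) ^ 2) / Real.cos θ)) -
          ((q : ℝ) - 2) * Real.sin θ / Real.tan (δ / 2))
        (Set.Icc 0 θ0) := by
  obtain ⟨hδ0, hδπ⟩ := hδ
  have hc : (0 : ℝ) < (q : ℝ) - 2 := by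
    have : (3 : ℝ) ≤ q := by exact_mod_cast hq
    linarith
  have hlt : δ / 2 < tan (δ / 2) := Real.lt_tan (by linarith) (by linarith)
  have hat : arctan (tan (δ / 2)) = δ / 2 := Real.arctan_tan (by linarith) (by linarith)
  generalize tan (δ / 2) = t at *
  generalize (q : ℝ) - 2 = c at *
  have ht : 0 < t := by linarith
  have hΦ0 : √(sin 0 ^ 2 + t ^ 2) = t := by simp [Real.sqrt_sq ht.le]
  have hΦ : HasStrictDerivAt (fun θ : ℝ => √(sin θ ^ 2 + t ^ 2)) 0 0 := by
    have h := (((Real.hasStrictDerivAt_sin 0).pow 2).add_const (t ^ 2)).sqrt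
      (by simp [ht.ne'])
    simpa using h
  have hG : HasStrictDerivAt (fun θ : ℝ => arctan (√(sin θ ^ 2 + t ^ 2) / cos θ)) 0 0 := by
    have h := (hΦ.fun_div (Real.hasStrictDerivAt_cos 0) (by simp)).arctan
    simpa using h
  have hG0 : arctan (√(sin 0 ^ 2 + t ^ 2) / cos 0) = δ / 2 := by
    rw [hΦ0, cos_zero, div_one, hat]
  have hL : HasStrictDerivAt (fun θ : ℝ => A0 / 4 + c * θ) c 0 := by
    simpa using ((hasStrictDerivAt_id (0 : ℝ)).const_mul c).const_add (A0 / 4)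
  have hh := ((hL.fun_mul hΦ).fun_div (hG.const_mul t)
    (by rw [hG0]; positivity)).fun_sub
      (((Real.hasStrictDerivAt_sin 0).const_mul c).div_const t)
  obtain ⟨ε, hε, hmono⟩ := exists_strictMonoOn_of_hasStrictDerivAt hh (by
    rw [hG0, hΦ0]
    have hval : c * (2 / δ - 1 / t) = ((c * t + (A0 / 4 + c * 0) * 0) * (t * (δ / 2)) -
        (A0 / 4 + c * 0) * t * (t * 0)) / (t * (δ / 2)) ^ 2 - c * cos 0 / t := by
      rw [cos_zero]
      field_simp
      ring
    rw [← hval]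
    refine mul_pos hc (sub_pos.2 ?_)
    rw [div_lt_div_iff₀ ht hδ0]
    linarith)
  refine ⟨min (ε / 2) (π / 4), ⟨by positivity, ?_⟩, hmono.mono fun x hx => ?_⟩
  · exact (min_le_right _ _).trans_lt (by linarith [pi_pos])
  · have := hx.2.trans (min_le_left _ _)
    rw [Metric.mem_ball, Real.dist_eq, sub_zero, abs_of_nonneg hx.1]
    linarith
end

section
/- For δ ∈ (0,π) and θ ∈ [0, π/2], set L(δ,θ) = (4·tan(δ/2)/√(sin²θ + tan²(δ/2)))·(π/2 − arctan(cos θ/√(sin²θ + tan²(δ/2)))) and A(δ,θ) = 4θ − L(δ,θ)·sin θ/tan(δ/2). If 0 < δ_2 < δ_1 < π and 0 < θ_1 < θ_2 ≤ π/2 satisfy L(δ_1,θ_1) = L(δ_2,θ_2), then A(δ_1,θ_1) < A(δ_2,θ_2). -/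
/-!
Put `t = tan (δ/2)`, `R = √(sin² θ + t²)`, and let `φ ∈ (0, π/2]` be the half-angle
`π/2 - arctan (cos θ / R)` subtended by each of the two circular arcs bounding the lens. Writing
`ℓ = t φ / R` and `w = φ sin θ / R`, one has `L = 4 ℓ`, `A = 4 (θ - w)`, `w² = φ² - ℓ²` and
`cot θ = (φ / w) cot φ`. So for a fixed perimeter the lenses form a one-parameter family indexed
by `φ ∈ (ℓ, π/2]`, with `A / 4` equal to
`quarterArea ℓ φ = π/2 - arctan (φ cos φ / (sin φ · w)) - w`, where `w = √(φ² - ℓ²)`.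

Its derivative in `φ` is
`ℓ² cos φ (sin φ - φ cos φ) / (w (sin² φ · w² + φ² cos² φ))`, which is positive because
`φ < tan φ` (`quarterArea_strictMonoOn`). Since `θ` is the sum of this area function and of the
increasing function `w`, a larger `θ` means a larger `φ`, hence a larger area.
-/

open Real

/-- A quarter of the area of the lens whose perimeter is `4 ℓ` and whose two boundary arcs each
subtend the angle `2 φ` at their centre. The cusp angle enters as `π/2 - arctan (cot θ)` rather than
through `tan θ`, so that the formula stays valid at `φ = θ = π/2`. -/
noncomputable def quarterArea (ℓ φ : ℝ) : ℝ :=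
  π / 2 - arctan (φ * cos φ / (sin φ * √(φ ^ 2 - ℓ ^ 2))) - √(φ ^ 2 - ℓ ^ 2)

lemma quarterArea_hasDerivAt {ℓ φ : ℝ} (hℓ : 0 < ℓ) (h1 : ℓ < φ) (h2 : φ ≤ π / 2) :
    HasDerivAt (quarterArea ℓ)
      (ℓ ^ 2 * cos φ * (sin φ - φ * cos φ) /
        (√(φ ^ 2 - ℓ ^ 2) * (sin φ ^ 2 * (φ ^ 2 - ℓ ^ 2) + φ ^ 2 * cos φ ^ 2))) φ := by
  have hφ : 0 < φ := hℓ.trans h1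
  have hs : 0 < sin φ := sin_pos_of_pos_of_lt_pi hφ (by linarith [pi_pos])
  have hpos : 0 < φ ^ 2 - ℓ ^ 2 := by nlinarith
  have hw : 0 < √(φ ^ 2 - ℓ ^ 2) := sqrt_pos.2 hpos
  have hw2 : √(φ ^ 2 - ℓ ^ 2) ^ 2 = φ ^ 2 - ℓ ^ 2 := sq_sqrt hpos.le
  have dw : HasDerivAt (fun x : ℝ => √(x ^ 2 - ℓ ^ 2)) (φ / √(φ ^ 2 - ℓ ^ 2)) φ := by
    have := ((hasDerivAt_pow 2 φ).sub_const (ℓ ^ 2)).sqrt hpos.ne'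
    convert this using 1
    norm_num
    field_simp
  have du := ((hasDerivAt_id φ).mul (hasDerivAt_cos φ)).div ((hasDerivAt_sin φ).mul dw)
    (mul_pos hs hw).ne'
  have dF := (du.arctan.const_sub (π / 2)).sub dw
  have hD : 0 < sin φ ^ 2 * (φ ^ 2 - ℓ ^ 2) + φ ^ 2 * cos φ ^ 2 := by positivity
  refine HasDerivAt.congr_deriv (f := quarterArea ℓ) dF ?_
  simp only [id, Pi.mul_apply, Pi.div_apply]
  have hl : ℓ ^ 2 = φ ^ 2 - √(φ ^ 2 - ℓ ^ 2) ^ 2 := by rw [hw2]; ring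
  have hc : cos φ ^ 2 = 1 - sin φ ^ 2 := by rw [cos_sq']
  generalize √(φ ^ 2 - ℓ ^ 2) = w at *
  rw [← hw2] at hD ⊢
  have hE : 0 < 1 + (φ * cos φ / (sin φ * w)) ^ 2 := by positivity
  rw [hl]
  have e1 : 1 + (φ * cos φ / (sin φ * w)) ^ 2
      = (sin φ ^ 2 * w ^ 2 + φ ^ 2 * cos φ ^ 2) / (sin φ * w) ^ 2 := by
    field_simp
  rw [e1]
  generalize hDD : sin φ ^ 2 * w ^ 2 + φ ^ 2 * cos φ ^ 2 = D at *
  field_simp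
  rw [← hDD]
  generalize cos φ = c at *
  generalize sin φ = s at *
  have hs2 : s ^ 2 = 1 - c ^ 2 := by linarith
  grind

/-- Among lenses of a fixed perimeter, the area increases with the angle subtended by the arcs. -/
lemma quarterArea_strictMonoOn {ℓ : ℝ} (hℓ : 0 < ℓ) :
    StrictMonoOn (quarterArea ℓ) (Set.Ioc ℓ (π / 2)) := by
  refine strictMonoOn_of_deriv_pos (convex_Ioc _ _)
    (fun x hx => (quarterArea_hasDerivAt hℓ hx.1 hx.2).continuousAt.continuousWithinAt) ?_
  intro x hx
  rw [interior_Ioc] at hx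
  rw [(quarterArea_hasDerivAt hℓ hx.1 hx.2.le).deriv]
  have hx0 : 0 < x := hℓ.trans hx.1
  have hc : 0 < cos x := cos_pos_of_mem_Ioo ⟨by linarith [pi_pos], hx.2⟩
  have hpos : 0 < x ^ 2 - ℓ ^ 2 := by nlinarith [hx.1]
  have htan := lt_tan hx0 hx.2
  rw [tan_eq_sin_div_cos, lt_div_iff₀ hc] at htan
  have h : 0 < sin x - x * cos x := by linarith
  positivity

/-- Passage from the parameters `(δ, θ)`, with `t = tan (δ/2)`, to `(ℓ, φ)`. -/
lemma exists_arc_param {t θ : ℝ} (ht : 0 < t) (h0 : 0 < θ) (h1 : θ ≤ π / 2) :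
    ∃ φ ℓ : ℝ, 0 < ℓ ∧ ℓ < φ ∧ φ ≤ π / 2 ∧
      (4 * t / √(sin θ ^ 2 + t ^ 2)) * (π / 2 - arctan (cos θ / √(sin θ ^ 2 + t ^ 2))) = 4 * ℓ ∧
      4 * ℓ * sin θ / t = 4 * √(φ ^ 2 - ℓ ^ 2) ∧
      θ = quarterArea ℓ φ + √(φ ^ 2 - ℓ ^ 2) := by
  have hs : 0 < sin θ := sin_pos_of_pos_of_lt_pi h0 (by linarith [pi_pos])
  have hc : 0 ≤ cos θ := cos_nonneg_of_neg_pi_div_two_le_of_le (by linarith) h1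
  have hR2 : √(sin θ ^ 2 + t ^ 2) ^ 2 = sin θ ^ 2 + t ^ 2 := sq_sqrt (by positivity)
  have hR : 0 < √(sin θ ^ 2 + t ^ 2) := sqrt_pos.2 (by positivity)
  generalize √(sin θ ^ 2 + t ^ 2) = R at *
  obtain ⟨φ, hφ⟩ : ∃ φ, φ = π / 2 - arctan (cos θ / R) := ⟨_, rfl⟩
  have hφ0 : 0 < φ := by rw [hφ]; linarith [arctan_lt_pi_div_two (cos θ / R)]
  have hφ1 : φ ≤ π / 2 := by
    have : 0 ≤ arctan (cos θ / R) := arctan_nonneg.2 (by positivity)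
    linarith
  have hcot : cos φ / sin φ = cos θ / R := by
    rw [hφ, cos_pi_div_two_sub, sin_pi_div_two_sub, ← tan_eq_sin_div_cos, tan_arctan]
  have hw : √(φ ^ 2 - (t / R * φ) ^ 2) = φ * sin θ / R := by
    rw [sqrt_eq_iff_mul_self_eq_of_pos (by positivity)]
    field_simp
    linear_combination -hR2
  have htR : t < R := by nlinarith [pow_pos hs 2]
  refine ⟨φ, t / R * φ, by positivity, ?_, hφ1, ?_, ?_, ?_⟩
  · have : t / R < 1 := (div_lt_one hR).2 htR
    nlinarith
  · rw [← hφ]; ring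
  · rw [hw]; field_simp
  · rw [quarterArea, hw, sub_add_cancel]
    have : φ * cos φ / (sin φ * (φ * sin θ / R)) = tan (π / 2 - θ) := by
      rw [tan_eq_sin_div_cos, sin_pi_div_two_sub, cos_pi_div_two_sub]
      calc φ * cos φ / (sin φ * (φ * sin θ / R)) = (cos φ / sin φ) * (R / sin θ) := by
            field_simp
        _ = cos θ / sin θ := by rw [hcot]; field_simp
    rw [this, arctan_tan (by linarith) (by linarith)]
    ring

/-- **Lemma `area`.** Among spherical lenses, with perimeter
`L(δ,θ) = (4 tan(δ/2)/√(sin²θ + tan²(δ/2)))·(π/2 − arctan(cos θ/√(sin²θ + tan²(δ/2))))`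
and area `A(δ,θ) = 4θ − L(δ,θ) sin θ / tan(δ/2)`: if `0 < δ₂ < δ₁ < π`,
`0 < θ₁ < θ₂ ≤ π/2` and `L(δ₁,θ₁) = L(δ₂,θ₂)`, then `A(δ₁,θ₁) < A(δ₂,θ₂)`. -/
theorem stmt_8 (L A : ℝ → ℝ → ℝ)
    (hL : ∀ δ θ, L δ θ =
      (4 * Real.tan (δ / 2) / Real.sqrt (Real.sin θ ^ 2 + Real.tan (δ / 2) ^ 2)) *
        (π / 2 - Real.arctan (Real.cos θ / Real.sqrt (Real.sin θ ^ 2 + Real.tan (δ / 2) ^ 2))))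
    (hA : ∀ δ θ, A δ θ = 4 * θ - L δ θ * Real.sin θ / Real.tan (δ / 2))
    (δ₁ δ₂ θ₁ θ₂ : ℝ)
    (hδ2 : 0 < δ₂) (hδ21 : δ₂ < δ₁) (hδ1 : δ₁ < π)
    (hθ1 : 0 < θ₁) (hθ12 : θ₁ < θ₂) (hθ2 : θ₂ ≤ π / 2)
    (hLeq : L δ₁ θ₁ = L δ₂ θ₂) :
    A δ₁ θ₁ < A δ₂ θ₂ := by
  have ht1 : 0 < tan (δ₁ / 2) := tan_pos_of_pos_of_lt_pi_div_two (by linarith) (by linarith)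
  have ht2 : 0 < tan (δ₂ / 2) := tan_pos_of_pos_of_lt_pi_div_two (by linarith) (by linarith)
  obtain ⟨φ₁, ℓ, hℓ, a1, b1, l1, w1, e1⟩ := exists_arc_param ht1 hθ1 (by linarith)
  obtain ⟨φ₂, ℓ', hℓ', a2, b2, l2, w2, e2⟩ := exists_arc_param ht2 (hθ1.trans hθ12) hθ2
  rw [← hL] at l1 l2
  obtain rfl : ℓ = ℓ' := by linarith
  have hmono := quarterArea_strictMonoOn hℓ
  rw [hA, hA, l1, l2, w1, w2]
  -- A larger cusp angle forces a larger `φ`: `θ` is a sum of two increasing functions of `φ`.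
  have hφ : φ₁ < φ₂ := by
    by_contra! hle
    have h1 := hmono.monotoneOn ⟨a2, b2⟩ ⟨a1, b1⟩ hle
    have h2 : √(φ₂ ^ 2 - ℓ ^ 2) ≤ √(φ₁ ^ 2 - ℓ ^ 2) := sqrt_le_sqrt (by nlinarith)
    linarith
  have := hmono ⟨a1, b1⟩ ⟨a2, b2⟩ hφ
  linarith
end

section
/- Let q ≥ 3 be an integer and A_0 a real number. For δ ∈ (0,π) and θ ∈ [0, π/2], set L(δ,θ) = (4·tan(δ/2)/√(sin²θ + tan²(δ/2)))·(π/2 − arctan(cos θ/√(sin²θ + tan²(δ/2)))), A(δ,θ) = 4θ − L(δ,θ)·sin θ/tan(δ/2), and h(δ,θ) = (A_0 + (q−2)·A(δ,θ))/L(δ,θ). Suppose δ_0 ∈ (0,π) and θ_0 ∈ (0, π/2) are such that h(δ_0,θ_0) = max_{θ ∈ [0,π/2]} h(δ_0,θ). Then there exists ε ∈ (0, δ_0) such that for every δ ∈ (δ_0 − ε, δ_0), sup_{θ ∈ [0,π/2]} h(δ,θ) > h(δ_0,θ_0). -/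
/-!
Write `t = tan (δ/2)` and `κ = sin θ / t`, the geodesic curvature of the two arcs bounding the
lens; Gauss–Bonnet is the relation `A = 4θ - κ L`, and `h = (A₀ + k A) / L` with `k = q - 2 > 0`.

For fixed `t` the first variation formula reads `∂L/∂θ = κ ∂A/∂θ`, and `∂A/∂θ > 0` because
`arctan x < x` for `x > 0`. Hence an interior critical point `θ₀` of `h(δ₀, ·)` satisfies
`κ (A₀ + k A) = k L` (`critical_relation`).

Now decrease `δ` while keeping `κ` fixed, i.e. along the curve `sin θ = κ tan (δ/2)`, which is
parametrised by `θ`. There `L` is an explicit function of `θ` (`lensPerimeter_curve`) with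
`dL/dθ = 4κ / (sin² θ + κ²)`, so by the critical relation `dh/dθ` at `θ₀` is
`(4k/L) (1 - (1 + κ²) / (sin² θ₀ + κ²)) < 0`, as `sin θ₀ < 1`. So `h` exceeds `h(δ₀, θ₀)` at the
points of the curve just to the left of `θ₀`, and these correspond to `δ` just to the left of `δ₀`.
-/

open Real

/-- Perimeter of the symmetric lens with half-angle `θ` at the cusps, as a function of
`t = tan (δ/2)`, where `δ` is the distance between the cusps. -/
noncomputable def lensPerimeter (t θ : ℝ) : ℝ :=
  (4 * t / √(sin θ ^ 2 + t ^ 2)) * (π / 2 - arctan (cos θ / √(sin θ ^ 2 + t ^ 2)))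

lemma lensPerimeter_pos {t : ℝ} (ht : 0 < t) (θ : ℝ) : 0 < lensPerimeter t θ := by
  have h1 := arctan_lt_pi_div_two (cos θ / √(sin θ ^ 2 + t ^ 2))
  unfold lensPerimeter
  have : 0 < π / 2 - arctan (cos θ / √(sin θ ^ 2 + t ^ 2)) := by linarith
  positivity

lemma hasDerivAt_lensPerimeter {t : ℝ} (ht : 0 < t) (θ : ℝ) :
    HasDerivAt (lensPerimeter t)
      (4 * t * (sin θ / √(sin θ ^ 2 + t ^ 2) ^ 2 -
        (π / 2 - arctan (cos θ / √(sin θ ^ 2 + t ^ 2))) * (sin θ * cos θ) /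
          √(sin θ ^ 2 + t ^ 2) ^ 3)) θ := by
  have hpos : 0 < sin θ ^ 2 + t ^ 2 := by positivity
  have hR : HasDerivAt (fun x => √(sin x ^ 2 + t ^ 2))
      (sin θ * cos θ / √(sin θ ^ 2 + t ^ 2)) θ := by
    have h1 := (((hasDerivAt_sin θ).pow 2).add_const (t ^ 2)).sqrt hpos.ne'
    refine h1.congr_deriv ?_
    simp only [Pi.pow_apply]
    field_simp
    ring
  have hRpos : 0 < √(sin θ ^ 2 + t ^ 2) := sqrt_pos.2 hpos
  have hRsq : √(sin θ ^ 2 + t ^ 2) ^ 2 = sin θ ^ 2 + t ^ 2 := sq_sqrt hpos.le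
  have hu := ((hasDerivAt_cos θ).div hR hRpos.ne').arctan
  have hfin := ((hasDerivAt_const θ (4 * t)).div hR hRpos.ne').mul (hu.const_sub (π / 2))
  refine hfin.congr_deriv ?_
  simp only [Pi.div_apply]
  generalize arctan (cos θ / √(sin θ ^ 2 + t ^ 2)) = a
  generalize √(sin θ ^ 2 + t ^ 2) = R at *
  have hc : cos θ ^ 2 = 1 - sin θ ^ 2 := cos_sq' θ
  generalize cos θ = c at *
  generalize sin θ = s at *
  have ht2 : t ^ 2 = R ^ 2 - s ^ 2 := by linarith
  have hRc : 0 < R ^ 2 + c ^ 2 := by positivity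
  field_simp
  ring_nf

/-- At an interior local maximum of `θ ↦ (A₀ + k A) / L` for fixed `t`, one has
`(A₀ + k A) / L = k / κ` with `κ = sin θ / t`. The conclusion is this identity with the
denominators cleared. -/
lemma critical_relation {k A0 t θ : ℝ} (ht : 0 < t) (hθ : θ ∈ Set.Ioo 0 (π / 2))
    (hloc : IsLocalMax (fun x => (A0 + k * (4 * x - lensPerimeter t x * sin x / t)) /
      lensPerimeter t x) θ) :
    (sin θ / t) * (A0 + k * (4 * θ - lensPerimeter t θ * sin θ / t)) =
      k * lensPerimeter t θ := by
  have hs : 0 < sin θ := sin_pos_of_pos_of_lt_pi hθ.1 (by linarith [hθ.2, pi_pos])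
  have hc : 0 < cos θ := cos_pos_of_mem_Ioo ⟨by linarith [hθ.1, pi_pos], hθ.2⟩
  have hL := hasDerivAt_lensPerimeter ht θ
  have hLpos := lensPerimeter_pos ht θ
  set R := √(sin θ ^ 2 + t ^ 2) with hR
  have hRpos : 0 < R := sqrt_pos.2 (by positivity)
  have hRsq : R ^ 2 = sin θ ^ 2 + t ^ 2 := sq_sqrt (by positivity)
  set φ := π / 2 - arctan (cos θ / R) with hφ
  have hLdef : lensPerimeter t θ = 4 * t / R * φ := rfl
  -- `φ = arctan (R / cos θ) < R / cos θ`, which gives `∂A/∂θ > 0`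
  have hφlt : φ * cos θ < R := by
    have h1 : φ = arctan (R / cos θ) := by
      rw [hφ, ← inv_div R, arctan_inv_of_pos (by positivity)]; ring
    have h2 : arctan (R / cos θ) < R / cos θ := by
      simpa only [tan_arctan] using
        lt_tan (arctan_pos.2 (by positivity : 0 < R / cos θ)) (arctan_lt_pi_div_two _)
    rw [h1]
    exact (lt_div_iff₀ hc).1 h2
  have hA : HasDerivAt (fun x => 4 * x - lensPerimeter t x * sin x / t)
      (4 * t ^ 2 / R ^ 3 * (R - φ * cos θ)) θ := by
    have h1 := ((hasDerivAt_id θ).const_mul 4).sub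
      ((hL.mul (hasDerivAt_sin θ)).div_const t)
    refine h1.congr_deriv ?_
    rw [hLdef]
    have ht2 : t ^ 2 = R ^ 2 - sin θ ^ 2 := by linarith
    field_simp
    rw [ht2]
    ring
  have hA' : 0 < 4 * t ^ 2 / R ^ 3 * (R - φ * cos θ) :=
    mul_pos (by positivity) (by linarith)
  have hN := ((hA.const_mul k).const_add A0).div hL hLpos.ne'
  have h0 := hloc.hasDerivAt_eq_zero hN
  -- the first variation formula `∂L/∂θ = κ ∂A/∂θ`
  have hvar : 4 * t * (sin θ / R ^ 2 - φ * (sin θ * cos θ) / R ^ 3) =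
      sin θ / t * (4 * t ^ 2 / R ^ 3 * (R - φ * cos θ)) := by
    field_simp
  rw [hvar, div_eq_zero_iff] at h0
  have h1 := h0.resolve_right (by positivity)
  apply mul_left_cancel₀ hA'.ne'
  linear_combination -h1

/-- The perimeter along the curve `sin θ = κ t` of lenses with arcs of constant curvature `κ`. -/
lemma lensPerimeter_curve {κ θ : ℝ} (hκ : 0 < κ) (hs : 0 < sin θ) :
    lensPerimeter (sin θ / κ) θ =
      4 / √(1 + κ ^ 2) * (π / 2 - arctan (κ / √(1 + κ ^ 2) * (cos θ / sin θ))) := by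
  have hR : √(sin θ ^ 2 + (sin θ / κ) ^ 2) = sin θ / κ * √(1 + κ ^ 2) := by
    rw [show sin θ ^ 2 + (sin θ / κ) ^ 2 = (sin θ / κ) ^ 2 * (1 + κ ^ 2) by field_simp; ring,
      sqrt_mul (by positivity), sqrt_sq (by positivity)]
  have hm : 0 < √(1 + κ ^ 2) := by positivity
  unfold lensPerimeter
  rw [hR]
  congr 1
  · field_simp
  · congr 2
    field_simp

lemma hasDerivAt_lensPerimeter_curve {κ θ : ℝ} (hκ : 0 < κ) (hs : 0 < sin θ) :
    HasDerivAt (fun x => lensPerimeter (sin x / κ) x) (4 * κ / (sin θ ^ 2 + κ ^ 2)) θ := by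
  have hm : 0 < √(1 + κ ^ 2) := by positivity
  have hmsq : √(1 + κ ^ 2) ^ 2 = 1 + κ ^ 2 := sq_sqrt (by positivity)
  have h1 := (((((hasDerivAt_cos θ).div (hasDerivAt_sin θ) hs.ne').const_mul
    (κ / √(1 + κ ^ 2))).arctan).const_sub (π / 2)).const_mul (4 / √(1 + κ ^ 2))
  have hev : ∀ᶠ x in nhds θ, 0 < sin x := continuous_sin.continuousAt.eventually_const_lt hs
  refine (h1.congr_of_eventuallyEq ?_).congr_deriv ?_
  · filter_upwards [hev] with x hx
    exact lensPerimeter_curve hκ hx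
  · have hc : cos θ ^ 2 = 1 - sin θ ^ 2 := cos_sq' θ
    simp only [Pi.div_apply]
    generalize √(1 + κ ^ 2) = m at *
    generalize cos θ = c at *
    generalize sin θ = s at *
    have h2 : 0 < m ^ 2 * s ^ 2 + κ ^ 2 * c ^ 2 := by positivity
    have h3 : m ^ 2 * s ^ 2 + κ ^ 2 * c ^ 2 = s ^ 2 + κ ^ 2 := by rw [hmsq, hc]; ring
    have h4 : -s * s - c * c = -1 := by linear_combination -hc
    rw [h4, ← h3]
    field_simp

/-- At a critical point, the ratio has negative derivative along the constant-curvature curve. -/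
lemma exists_hasDerivAt_curve_neg {k A0 κ θ : ℝ} (hk : 0 < k) (hκ : 0 < κ)
    (hθ : θ ∈ Set.Ioo 0 (π / 2))
    (hcrit : κ * (A0 + k * (4 * θ - κ * lensPerimeter (sin θ / κ) θ)) =
      k * lensPerimeter (sin θ / κ) θ) :
    ∃ D < 0, HasDerivAt (fun x => (A0 + k * (4 * x - κ * lensPerimeter (sin x / κ) x)) /
      lensPerimeter (sin x / κ) x) D θ := by
  have hs : 0 < sin θ := sin_pos_of_pos_of_lt_pi hθ.1 (by linarith [hθ.2, pi_pos])
  have hc : 0 < cos θ := cos_pos_of_mem_Ioo ⟨by linarith [hθ.1, pi_pos], hθ.2⟩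
  have hs1 : sin θ ^ 2 < 1 := by nlinarith [sin_sq_add_cos_sq θ]
  have hL := hasDerivAt_lensPerimeter_curve hκ hs
  have hLpos := lensPerimeter_pos (div_pos hs hκ) θ
  have hN := ((((((hasDerivAt_id θ).const_mul 4).sub (hL.const_mul κ))).const_mul
    k).const_add A0).div hL hLpos.ne'
  refine ⟨_, ?_, hN⟩
  refine div_neg_of_neg_of_pos ?_ (by positivity)
  simp only [Pi.sub_apply, id]
  generalize lensPerimeter (sin θ / κ) θ = P at *
  have hN' : A0 + k * (4 * θ - κ * P) = k * P / κ := by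
    rw [eq_div_iff hκ.ne']; linarith
  rw [hN']
  have : k * (4 * 1 - κ * (4 * κ / (sin θ ^ 2 + κ ^ 2))) * P -
      k * P / κ * (4 * κ / (sin θ ^ 2 + κ ^ 2)) =
      -(4 * k * P * (1 - sin θ ^ 2) / (sin θ ^ 2 + κ ^ 2)) := by
    field_simp
    ring
  rw [this, neg_lt_zero]
  have := sub_pos.2 hs1
  positivity

lemma eventually_gt_left_of_hasDerivAt_neg {f : ℝ → ℝ} {D a : ℝ} (hD : D < 0)
    (hf : HasDerivAt f D a) : ∀ᶠ x in nhds a, x < a → f a < f x := by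
  have h1 := (hasDerivAt_iff_tendsto_slope.1 hf).eventually_lt_const hD
  rw [eventually_nhdsWithin_iff] at h1
  filter_upwards [h1] with x hx hxa
  have h2 := hx hxa.ne
  rw [slope_def_field, div_neg_iff] at h2
  rcases h2 with h2 | h2 <;> linarith [h2.1, h2.2]

/-- **Lemma `area2`.** With the lens perimeter `L(δ,θ)`, area `A(δ,θ)` and ratio
`h(δ,θ) = (A₀ + (q−2)A(δ,θ))/L(δ,θ)`: if `h(δ₀,·)` attains its maximum on `[0,π/2]` at an
interior point `θ₀ ∈ (0,π/2)`, then for all `δ < δ₀` sufficiently close to `δ₀` the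
supremum of `h(δ,·)` on `[0,π/2]` exceeds `h(δ₀,θ₀)`. -/
theorem stmt_9 (q : ℕ) (hq : 3 ≤ q) (A0 : ℝ) (L A h : ℝ → ℝ → ℝ)
    (hL : ∀ δ θ, L δ θ =
      (4 * Real.tan (δ / 2) / Real.sqrt (Real.sin θ ^ 2 + Real.tan (δ / 2) ^ 2)) *
        (π / 2 - Real.arctan (Real.cos θ / Real.sqrt (Real.sin θ ^ 2 + Real.tan (δ / 2) ^ 2))))
    (hA : ∀ δ θ, A δ θ = 4 * θ - L δ θ * Real.sin θ / Real.tan (δ / 2))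
    (hh : ∀ δ θ, h δ θ = (A0 + ((q : ℝ) - 2) * A δ θ) / L δ θ)
    (δ₀ θ₀ : ℝ) (hδ₀ : δ₀ ∈ Set.Ioo 0 π) (hθ₀ : θ₀ ∈ Set.Ioo 0 (π / 2))
    (hmax : ∀ θ ∈ Set.Icc (0:ℝ) (π / 2), h δ₀ θ ≤ h δ₀ θ₀) :
    ∃ ε ∈ Set.Ioo 0 δ₀, ∀ δ ∈ Set.Ioo (δ₀ - ε) δ₀,
      ∃ θ ∈ Set.Icc (0:ℝ) (π / 2), h δ₀ θ₀ < h δ θ := by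
  have hP : ∀ δ θ, L δ θ = lensPerimeter (tan (δ / 2)) θ := fun δ θ => hL δ θ
  have hH : ∀ δ θ, h δ θ = (A0 + ((q : ℝ) - 2) *
      (4 * θ - lensPerimeter (tan (δ / 2)) θ * sin θ / tan (δ / 2))) /
      lensPerimeter (tan (δ / 2)) θ := fun δ θ => by rw [hh, hA, hP]
  have hk : (0 : ℝ) < (q : ℝ) - 2 := by
    have : (3 : ℝ) ≤ q := by exact_mod_cast hq
    linarith
  obtain ⟨hδpos, hδpi⟩ := hδ₀
  have ht : 0 < tan (δ₀ / 2) := tan_pos_of_pos_of_lt_pi_div_two (by linarith) (by linarith)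
  have hs : 0 < sin θ₀ := sin_pos_of_pos_of_lt_pi hθ₀.1 (by linarith [hθ₀.2, pi_pos])
  have hloc : IsLocalMax (fun x => (A0 + ((q : ℝ) - 2) *
      (4 * x - lensPerimeter (tan (δ₀ / 2)) x * sin x / tan (δ₀ / 2))) /
      lensPerimeter (tan (δ₀ / 2)) x) θ₀ := by
    filter_upwards [Icc_mem_nhds hθ₀.1 hθ₀.2] with x hx
    simpa only [hH] using hmax x hx
  have hcrit := critical_relation ht hθ₀ hloc
  obtain ⟨κ, hκdef⟩ : ∃ κ, κ = sin θ₀ / tan (δ₀ / 2) := ⟨_, rfl⟩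
  have hκ : 0 < κ := hκdef ▸ div_pos hs ht
  have hκt : κ * tan (δ₀ / 2) = sin θ₀ := by rw [hκdef]; field_simp
  -- `h` on the curve `sin θ = κ tan (δ / 2)`
  have hcurve : ∀ δ θ, 0 < tan (δ / 2) → κ * tan (δ / 2) = sin θ →
      h δ θ = (A0 + ((q : ℝ) - 2) * (4 * θ - κ * lensPerimeter (sin θ / κ) θ)) /
        lensPerimeter (sin θ / κ) θ := by
    intro δ θ h1 h2
    have h3 : sin θ / κ = tan (δ / 2) := by rw [← h2]; field_simp
    rw [hH, h3, ← h2]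
    congr 4
    field_simp
  have htκ : sin θ₀ / κ = tan (δ₀ / 2) := by rw [← hκt]; field_simp
  obtain ⟨D, hD, hderiv⟩ := exists_hasDerivAt_curve_neg (A0 := A0) hk hκ hθ₀ (by
    rw [htκ, ← hcrit, hκdef]; ring)
  have hev := eventually_gt_left_of_hasDerivAt_neg hD hderiv
  have hcos : cos (δ₀ / 2) ≠ 0 :=
    (cos_pos_of_mem_Ioo ⟨by linarith [pi_pos], by linarith⟩).ne'
  have hcont : Filter.Tendsto (fun δ => arcsin (κ * tan (δ / 2))) (nhds δ₀) (nhds θ₀) := by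
    have h1 : ContinuousAt (fun δ : ℝ => tan (δ / 2)) δ₀ :=
      ContinuousAt.comp (g := tan) (continuousAt_tan.2 hcos) (by fun_prop)
    have h2 : ContinuousAt (fun δ => arcsin (κ * tan (δ / 2))) δ₀ :=
      continuous_arcsin.continuousAt.comp (continuousAt_const.mul h1)
    have h3 : arcsin (κ * tan (δ₀ / 2)) = θ₀ := by
      rw [hκt, arcsin_sin (by linarith [hθ₀.1, pi_pos]) hθ₀.2.le]
    simpa only [ContinuousAt, h3] using h2
  obtain ⟨r, hr, hball⟩ := Metric.eventually_nhds_iff.1 (hcont.eventually hev)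
  refine ⟨min r (δ₀ / 2), ⟨by positivity, by linarith [min_le_right r (δ₀ / 2)]⟩, ?_⟩
  rintro δ ⟨hδ1, hδ2⟩
  have hr1 := min_le_left r (δ₀ / 2)
  have hr2 := min_le_right r (δ₀ / 2)
  have htδ : 0 < tan (δ / 2) := tan_pos_of_pos_of_lt_pi_div_two (by linarith) (by linarith)
  have htlt : κ * tan (δ / 2) < sin θ₀ := by
    rw [← hκt]
    exact mul_lt_mul_of_pos_left
      (tan_lt_tan_of_lt_of_lt_pi_div_two (by linarith) (by linarith) (by linarith)) hκ
  have hpos : 0 < κ * tan (δ / 2) := mul_pos hκ htδ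
  have hsin : sin (arcsin (κ * tan (δ / 2))) = κ * tan (δ / 2) :=
    sin_arcsin (by linarith) (by linarith [sin_le_one θ₀])
  have hlt : arcsin (κ * tan (δ / 2)) < θ₀ := by
    rw [arcsin_lt_iff_lt_sin' ⟨by linarith [hθ₀.1, pi_pos], hθ₀.2.le⟩]
    exact htlt
  refine ⟨arcsin (κ * tan (δ / 2)), ⟨arcsin_nonneg.2 hpos.le, arcsin_le_pi_div_two _⟩, ?_⟩
  rw [hcurve δ₀ θ₀ ht hκt, hcurve δ _ htδ hsin.symm]
  refine hball ?_ hlt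
  rw [Real.dist_eq, abs_lt]
  constructor <;> linarith
end

section
/- Let L be a real number with 0 < L < 2π and define g : [0,L] → ℝ by g(x) = 4π − √(4π² − x²) − √(4π² − (L−x)²). Then g is strictly decreasing on [0, L/2], and consequently for all x ∈ [0,L] one has g(L/2) ≤ g(x) ≤ g(0) = 2π − √(4π² − L²). -/
/-!
With `R = 2π`, the claim is that `f(a) + f(L - a) < f(b) + f(L - b)` for `f(t) = √(R² - t²)` and
`0 ≤ a < b ≤ L / 2`, an instance of the strict concavity of the circular arc `f`. Here it is
obtained by comparing chords algebraically: the difference of squares `f(a)² - f(b)² = b² - a²` is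
smaller than `f(L - b)² - f(L - a)² = (L - a)² - (L - b)²`, while the sum `f(a) + f(b)` is at least
`f(L - b) + f(L - a)`; dividing, `f(a) - f(b) < f(L - b) - f(L - a)`. The two bounds on `[0, L]`
follow from monotonicity on `[0, L / 2]` and the symmetry `x ↦ L - x`.
-/

open Real

lemma sqrt_add_sqrt_lt {R L a b : ℝ} (hLR : L < R) (ha : 0 ≤ a) (hab : a < b) (hb : b ≤ L / 2) :
    √(R ^ 2 - a ^ 2) + √(R ^ 2 - (L - a) ^ 2) < √(R ^ 2 - b ^ 2) + √(R ^ 2 - (L - b) ^ 2) := by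
  have hp := Real.sq_sqrt (show 0 ≤ R ^ 2 - a ^ 2 by nlinarith)
  have hq := Real.sq_sqrt (show 0 ≤ R ^ 2 - b ^ 2 by nlinarith)
  have hr := Real.sq_sqrt (show 0 ≤ R ^ 2 - (L - b) ^ 2 by nlinarith)
  have hs := Real.sq_sqrt (show 0 ≤ R ^ 2 - (L - a) ^ 2 by nlinarith)
  have hqr : √(R ^ 2 - (L - b) ^ 2) ≤ √(R ^ 2 - b ^ 2) := Real.sqrt_le_sqrt (by nlinarith)
  have hps : √(R ^ 2 - (L - a) ^ 2) ≤ √(R ^ 2 - a ^ 2) := Real.sqrt_le_sqrt (by nlinarith)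
  have hsr : √(R ^ 2 - (L - a) ^ 2) ≤ √(R ^ 2 - (L - b) ^ 2) := Real.sqrt_le_sqrt (by nlinarith)
  have hp0 := Real.sqrt_nonneg (R ^ 2 - a ^ 2)
  have hq0 := Real.sqrt_nonneg (R ^ 2 - b ^ 2)
  have hsq : b ^ 2 - a ^ 2 < (L - a) ^ 2 - (L - b) ^ 2 := by
    nlinarith [mul_pos (sub_pos.2 hab) (show 0 < L - a - b by linarith)]
  generalize √(R ^ 2 - a ^ 2) = p at *
  generalize √(R ^ 2 - b ^ 2) = q at *
  generalize √(R ^ 2 - (L - b) ^ 2) = r at *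
  generalize √(R ^ 2 - (L - a) ^ 2) = s at *
  by_contra! h
  -- `(p - q) (p + q) < (r - s) (r + s) ≤ (r - s) (p + q) ≤ (p - q) (p + q)`
  have h₁ : (r - s) * (r + s) ≤ (r - s) * (p + q) :=
    mul_le_mul_of_nonneg_left (by linarith) (by linarith)
  have h₂ : (r - s) * (p + q) ≤ (p - q) * (p + q) :=
    mul_le_mul_of_nonneg_right (by linarith) (by linarith)
  nlinarith

/-- **Lemma `2circle`.** For `0 < L < 2π`, the function
`g(x) = 4π − √(4π² − x²) − √(4π² − (L−x)²)` is strictly decreasing on `[0, L/2]`, and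
hence `g(L/2) ≤ g(x) ≤ g(0) = 2π − √(4π² − L²)` for all `x ∈ [0, L]`. -/
theorem stmt_10 (L : ℝ) (hL0 : 0 < L) (hL : L < 2 * π) :
    StrictAntiOn
      (fun x : ℝ => 4 * π - Real.sqrt (4 * π ^ 2 - x ^ 2) - Real.sqrt (4 * π ^ 2 - (L - x) ^ 2))
      (Set.Icc 0 (L / 2)) ∧
    (∀ x ∈ Set.Icc (0:ℝ) L,
      (4 * π - Real.sqrt (4 * π ^ 2 - (L / 2) ^ 2) - Real.sqrt (4 * π ^ 2 - (L - L / 2) ^ 2))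
        ≤ 4 * π - Real.sqrt (4 * π ^ 2 - x ^ 2) - Real.sqrt (4 * π ^ 2 - (L - x) ^ 2) ∧
      4 * π - Real.sqrt (4 * π ^ 2 - x ^ 2) - Real.sqrt (4 * π ^ 2 - (L - x) ^ 2)
        ≤ 4 * π - Real.sqrt (4 * π ^ 2 - (0:ℝ) ^ 2) - Real.sqrt (4 * π ^ 2 - (L - 0) ^ 2)) ∧
    4 * π - Real.sqrt (4 * π ^ 2 - (0:ℝ) ^ 2) - Real.sqrt (4 * π ^ 2 - (L - 0) ^ 2)
      = 2 * π - Real.sqrt (4 * π ^ 2 - L ^ 2) := by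
  have hR : 4 * π ^ 2 = (2 * π) ^ 2 := by ring
  have hanti : StrictAntiOn
      (fun x : ℝ => 4 * π - Real.sqrt (4 * π ^ 2 - x ^ 2) - Real.sqrt (4 * π ^ 2 - (L - x) ^ 2))
      (Set.Icc 0 (L / 2)) := by
    intro a ha b hb hab
    have h := sqrt_add_sqrt_lt hL ha.1 hab hb.2
    simp only [hR]
    linarith
  refine ⟨hanti, ?_, ?_⟩
  · have half : ∀ x ∈ Set.Icc (0 : ℝ) (L / 2), _ ∧ _ := fun x hx =>
      And.intro (hanti.antitoneOn hx (Set.right_mem_Icc.2 (by linarith)) hx.2)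
        (hanti.antitoneOn (Set.left_mem_Icc.2 (by linarith)) hx hx.1)
    intro x hx
    rcases le_total x (L / 2) with h | h
    · exact half x ⟨hx.1, h⟩
    · have h' := half (L - x) ⟨by linarith [hx.2], by linarith⟩
      simp only [sub_sub_cancel] at h'
      exact ⟨by linarith [h'.1], by linarith [h'.2]⟩
  · have h : √(4 * π ^ 2 - (0 : ℝ) ^ 2) = 2 * π := by
      rw [show 4 * π ^ 2 - (0 : ℝ) ^ 2 = (2 * π) ^ 2 by ring]
      exact Real.sqrt_sq (by linarith)
    rw [h, sub_zero]
    ring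
end

section
/- Let E be a finite set of unit vectors in ℝ³ (the unit sphere S) with at least 3 elements, and let δ_E = min{ arccos⟨a,b⟩ : a, b ∈ E, a ≠ b } be the minimal pairwise spherical distance. Then δ_E ≤ 2π/3. Moreover, if δ_E = 2π/3, then E has exactly 3 elements, arccos⟨a,b⟩ = 2π/3 for every pair of distinct a, b ∈ E, and E is contained in a 2-dimensional linear subspace of ℝ³ (i.e., the three points lie on a great circle and divide it equally). -/
/-!
If three unit vectors `a, b, c` have pairwise inner products at most `-1/2`, then
`0 ≤ ‖a + b + c‖² = 3 + 2 (⟪a, b⟫ + ⟪a, c⟫ + ⟪b, c⟫) ≤ 0`, so `a + b + c = 0`, and then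
`1 = ‖c‖² = ‖a + b‖² = 2 + 2 ⟪a, b⟫` gives `⟪a, b⟫ = -1/2`.

A lower bound `2π/3` on the distances is precisely the bound `-1/2` on the inner products, so when
`δE ≥ 2π/3` this applies to every triple of distinct points of `E`. Hence some distance equals
`2π/3`, which proves `δE ≤ 2π/3`. If `δE = 2π/3`, all distances are equal, and for fixed distinct
`a, b ∈ E` every other point must be `-(a + b)`; so `E` has three points, all in the plane spanned
by `a` and `b`.
-/

open Real
open scoped RealInnerProductSpace

theorem arccos_neg_half : Real.arccos (-1 / 2) = 2 * π / 3 := by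
  have h : Real.cos (2 * π / 3) = -1 / 2 := by
    rw [show 2 * π / 3 = π - π / 3 by ring, Real.cos_pi_sub, Real.cos_pi_div_three]
    norm_num
  rw [← h, Real.arccos_cos (by positivity) (by linarith [Real.pi_pos])]

/-- No condition `-1 ≤ x` is needed: `arccos` is constantly `π` on `x ≤ -1`. -/
theorem le_neg_half_of_le_arccos {x : ℝ} (h : 2 * π / 3 ≤ Real.arccos x) : x ≤ -1 / 2 := by
  by_contra! hx
  have h1 : Real.arccos x < Real.arccos (-1 / 2) := by
    rcases le_or_gt x 1 with h1 | h1
    · exact Real.arccos_lt_arccos (by norm_num) hx h1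
    · rw [Real.arccos_of_one_le h1.le, arccos_neg_half]
      positivity
  rw [arccos_neg_half] at h1
  linarith

section Triple

variable {F : Type*} [NormedAddCommGroup F] [InnerProductSpace ℝ F]

theorem add_add_eq_zero_of_inner_le {a b c : F} (ha : ‖a‖ = 1) (hb : ‖b‖ = 1) (hc : ‖c‖ = 1)
    (hab : ⟪a, b⟫ ≤ -1 / 2) (hac : ⟪a, c⟫ ≤ -1 / 2) (hbc : ⟪b, c⟫ ≤ -1 / 2) :
    a + b + c = 0 := by
  have h1 := norm_add_sq_real (a + b) c
  have h2 := norm_add_sq_real a b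
  rw [inner_add_left] at h1
  rw [ha, hb] at h2
  rw [hc] at h1
  have h3 : ‖a + b + c‖ ^ 2 = 0 := le_antisymm (by linarith) (sq_nonneg _)
  exact norm_eq_zero.1 (pow_eq_zero_iff two_ne_zero |>.1 h3)

theorem inner_eq_neg_half_of_add_add_eq_zero {a b c : F} (ha : ‖a‖ = 1) (hb : ‖b‖ = 1)
    (hc : ‖c‖ = 1) (h : a + b + c = 0) : ⟪a, b⟫ = -1 / 2 := by
  have h2 := norm_add_sq_real a b
  rw [eq_neg_of_add_eq_zero_left h, norm_neg, ha, hb, hc] at h2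
  linarith

theorem finrank_span_pair_eq_two {a b : F} (ha : ‖a‖ = 1) (hb : ‖b‖ = 1)
    (hab : ⟪a, b⟫ = -1 / 2) : Module.finrank ℝ (Submodule.span ℝ {a, b}) = 2 := by
  have hli : LinearIndependent ℝ ![a, b] := by
    rw [LinearIndependent.pair_iff]
    intro s t hst
    have h1 : ⟪a, s • a + t • b⟫ = 0 := by rw [hst, inner_zero_right]
    have h2 : ⟪b, s • a + t • b⟫ = 0 := by rw [hst, inner_zero_right]
    rw [inner_add_right, inner_smul_right, inner_smul_right, real_inner_self_eq_norm_sq, ha,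
      hab] at h1
    rw [inner_add_right, inner_smul_right, inner_smul_right, real_inner_self_eq_norm_sq, hb,
      real_inner_comm, hab] at h2
    constructor <;> linarith
  have h := finrank_span_eq_card hli
  rwa [Matrix.range_cons_cons_empty, Fintype.card_fin] at h

end Triple

/-- **Minimal spherical distance of `q ≥ 3` points.** For a finite set `E` of at least
three unit vectors in `ℝ³` with minimal pairwise spherical distance `δ_E`, one has
`δ_E ≤ 2π/3`; and if `δ_E = 2π/3` then `E` has exactly three points, all pairwise
spherical distances equal `2π/3`, and `E` lies in a 2-dimensional linear subspace
(a great circle). -/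
theorem stmt_12 (E : Finset (EuclideanSpace ℝ (Fin 3)))
    (hunit : ∀ a ∈ E, ‖a‖ = 1) (hcard : 3 ≤ E.card)
    (δE : ℝ)
    (hδE : IsLeast {d : ℝ | ∃ a ∈ E, ∃ b ∈ E, a ≠ b ∧ d = Real.arccos ⟪a, b⟫} δE) :
    δE ≤ 2 * π / 3 ∧
    (δE = 2 * π / 3 →
      E.card = 3 ∧
      (∀ a ∈ E, ∀ b ∈ E, a ≠ b → Real.arccos ⟪a, b⟫ = 2 * π / 3) ∧
      ∃ V : Submodule ℝ (EuclideanSpace ℝ (Fin 3)),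
        Module.finrank ℝ V = 2 ∧ ∀ a ∈ E, a ∈ V) := by
  classical
  have hle : ∀ a ∈ E, ∀ b ∈ E, a ≠ b → δE ≤ Real.arccos ⟪a, b⟫ :=
    fun a ha b hb hab => hδE.2 ⟨a, ha, b, hb, hab, rfl⟩
  have hsum : 2 * π / 3 ≤ δE → ∀ a ∈ E, ∀ b ∈ E, ∀ c ∈ E, a ≠ b → a ≠ c → b ≠ c →
      a + b + c = 0 := fun hδ a ha b hb c hc hab hac hbc =>
    add_add_eq_zero_of_inner_le (hunit a ha) (hunit b hb) (hunit c hc)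
      (le_neg_half_of_le_arccos (hδ.trans (hle a ha b hb hab)))
      (le_neg_half_of_le_arccos (hδ.trans (hle a ha c hc hac)))
      (le_neg_half_of_le_arccos (hδ.trans (hle b hb c hc hbc)))
  have hinner : 2 * π / 3 ≤ δE → ∀ a ∈ E, ∀ b ∈ E, a ≠ b → ⟪a, b⟫ = -1 / 2 := by
    intro hδ a ha b hb hab
    obtain ⟨c, hc, hcab⟩ : ∃ c ∈ E, c ∉ ({a, b} : Finset _) :=
      Finset.exists_mem_notMem_of_card_lt_card (Finset.card_le_two.trans_lt hcard)
    simp only [Finset.mem_insert, Finset.mem_singleton, not_or] at hcab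
    exact inner_eq_neg_half_of_add_add_eq_zero (hunit a ha) (hunit b hb) (hunit c hc)
      (hsum hδ a ha b hb c hc hab (Ne.symm hcab.1) (Ne.symm hcab.2))
  obtain ⟨a, ha, b, hb, hab, hmin⟩ := hδE.1
  have hthird : δE = 2 * π / 3 → ∀ c ∈ E, c = a ∨ c = b ∨ c = -(a + b) := by
    intro hδ c hc
    by_cases hca : c = a
    · exact Or.inl hca
    by_cases hcb : c = b
    · exact Or.inr (Or.inl hcb)
    exact Or.inr (Or.inr (eq_neg_of_add_eq_zero_right
      (hsum hδ.ge a ha b hb c hc hab (Ne.symm hca) (Ne.symm hcb))))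
  refine ⟨?_, fun hδ => ⟨le_antisymm ?_ hcard, ?_, Submodule.span ℝ {a, b},
    finrank_span_pair_eq_two (hunit a ha) (hunit b hb) (hinner hδ.ge a ha b hb hab), ?_⟩⟩
  · by_contra! h
    have hδ : δE = 2 * π / 3 := by rw [hmin, hinner h.le a ha b hb hab, arccos_neg_half]
    exact h.ne' hδ
  · have hsub : E ⊆ {a, b, -(a + b)} := fun c hc => by simpa using hthird hδ c hc
    exact (Finset.card_le_card hsub).trans Finset.card_le_three
  · intro x hx y hy hxy
    rw [hinner hδ.ge x hx y hy hxy, arccos_neg_half]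
  · have haV : a ∈ Submodule.span ℝ {a, b} := Submodule.subset_span (by simp)
    have hbV : b ∈ Submodule.span ℝ {a, b} := Submodule.subset_span (by simp)
    intro c hc
    rcases hthird hδ c hc with rfl | rfl | rfl
    · exact haV
    · exact hbV
    · exact neg_mem (add_mem haV hbV)
end

section
/- Let γ : [0,1] → ℝ³ be a continuous closed curve (γ(0) = γ(1)) whose image lies on the unit sphere S = {x : ‖x‖ = 1}, and suppose there exist finitely many points 0 = t_0 < t_1 < ⋯ < t_n = 1 such that for each i the image γ([t_{i−1}, t_i]) is contained in some affine plane of ℝ³ (so each piece is an arc of a circle on S). If the spherical length of γ — the supremum over all partitions 0 = s_0 ≤ s_1 ≤ ⋯ ≤ s_m = 1 of Σ_k arccos⟨γ(s_{k−1}), γ(s_k)⟩ — is strictly less than 2π, then γ lies in an open hemisphere: there exists a unit vector v ∈ ℝ³ such that ⟨γ(t), v⟩ > 0 for all t ∈ [0,1]. -/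
/-!
This is the classical midpoint argument for closed curves of length `< 2π`. If
`p = γ 0` and `q = γ s` cut the curve into two halves of length `< π`,
then the hemisphere centred at the midpoint of `p` and `q` works, because a point `z` with
`⟪z, p + q⟫ ≤ 0` satisfies `d(p, z) + d(z, q) ≥ π` (`pi_le_arccos_add_arccos`).

The choice of `s` avoids continuity of arc length. Call `s` bad for the first (second) half if some
`z = γ x` with `x ≤ s` (with `s ≤ x`) satisfies `⟪z, γ 0 + γ s⟫ ≤ 0`. Both sets of bad parameters are
closed by compactness, and they are disjoint because a common element would give a partition
`0 ≤ x ≤ s ≤ y ≤ 1` of length `≥ 2π`. As `0` is not bad for the first half and `1` is not bad for the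
second, connectedness of `[0, 1]` yields a parameter that is bad for neither.
-/

open Real
open scoped RealInnerProductSpace

/-- If `a = ⟪p, z⟫` and `b = ⟪z, q⟫`, this says that a path from `p` to `q` through a point `z` with
`⟪z, p + q⟫ ≤ 0` has length at least `π`. -/
lemma pi_le_arccos_add_arccos {a b : ℝ} (h : a + b ≤ 0) : π ≤ arccos a + arccos b := by
  have := Real.arccos_le_arccos (show a ≤ -b by linarith)
  rw [Real.arccos_neg] at this
  linarith

/-- The parameters `s ∈ [0, 1]` that are bad with respect to a closed relation `R` between `x`
and `s` form a closed set, as the projection of a compact set. -/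
lemma isClosed_bad {f : ℝ × ℝ → ℝ} (hf : Continuous f) {R : Set (ℝ × ℝ)} (hR : IsClosed R) :
    IsClosed {s : ℝ | ∃ x ∈ Set.Icc (0:ℝ) 1, s ∈ Set.Icc (0:ℝ) 1 ∧ (x, s) ∈ R ∧ f (x, s) ≤ 0} := by
  have hK : IsCompact ((Set.Icc (0:ℝ) 1 ×ˢ Set.Icc (0:ℝ) 1) ∩ (R ∩ {p | f p ≤ 0})) :=
    (isCompact_Icc.prod isCompact_Icc).inter_right
      (hR.inter (isClosed_le hf continuous_const))
  convert (hK.image continuous_snd).isClosed using 1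
  ext s
  constructor
  · rintro ⟨x, hx, hs, h1, h2⟩
    exact ⟨(x, s), ⟨⟨hx, hs⟩, h1, h2⟩, rfl⟩
  · rintro ⟨⟨x, s'⟩, ⟨⟨hx, hs⟩, h1, h2⟩, rfl⟩
    exact ⟨x, hx, hs, h1, h2⟩

/-- **Lemma (Rad1/ber) (iii).** A closed curve on the unit sphere of `ℝ³` consisting of
finitely many circular arcs (pieces lying in affine planes) whose spherical length
(total variation of `arccos⟪·,·⟫` over partitions) is strictly less than `2π` lies in
some open hemisphere. -/
theorem stmt_13 (γ : ℝ → EuclideanSpace ℝ (Fin 3))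
    (hcont : ContinuousOn γ (Set.Icc 0 1)) (hclosed : γ 0 = γ 1)
    (hsphere : ∀ u ∈ Set.Icc (0:ℝ) 1, ‖γ u‖ = 1)
    (n : ℕ) (hn : 0 < n) (t : ℕ → ℝ) (ht0 : t 0 = 0) (htn : t n = 1)
    (hmono : ∀ i < n, t i < t (i + 1))
    (hplanar : ∀ i < n, ∃ w : EuclideanSpace ℝ (Fin 3), w ≠ 0 ∧
      ∃ c : ℝ, ∀ s ∈ Set.Icc (t i) (t (i + 1)), ⟪γ s, w⟫ = c)
    (C : ℝ) (hC : C < 2 * π)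
    (hlen : ∀ (m : ℕ) (s : ℕ → ℝ), s 0 = 0 → s m = 1 → (∀ k < m, s k ≤ s (k + 1)) →
      ∑ k ∈ Finset.range m, Real.arccos ⟪γ (s k), γ (s (k + 1))⟫ ≤ C) :
    ∃ v : EuclideanSpace ℝ (Fin 3), ‖v‖ = 1 ∧ ∀ u ∈ Set.Icc (0:ℝ) 1, 0 < ⟪γ u, v⟫ := by
  -- `G` extends `γ` to a continuous curve on the whole line, constant outside `[0, 1]`.
  obtain ⟨G, hG, hGγ⟩ : ∃ G : ℝ → EuclideanSpace ℝ (Fin 3), Continuous G ∧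
      ∀ u ∈ Set.Icc (0:ℝ) 1, G u = γ u := by
    refine ⟨fun u => γ (max 0 (min 1 u)), hcont.comp_continuous (by fun_prop) fun u =>
      ⟨le_max_left _ _, max_le zero_le_one (min_le_left _ _)⟩, fun u hu => ?_⟩
    simp only [min_eq_right hu.2, max_eq_right hu.1]
  have hf : Continuous fun p : ℝ × ℝ => ⟪G p.1, G 0 + G p.2⟫ := by fun_prop
  have hA := isClosed_bad hf (R := {p | p.1 ≤ p.2}) (isClosed_le continuous_fst continuous_snd)
  have hB := isClosed_bad hf (R := {p | p.2 ≤ p.1}) (isClosed_le continuous_snd continuous_fst)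
  set A := {s : ℝ | ∃ x ∈ Set.Icc (0:ℝ) 1, s ∈ Set.Icc (0:ℝ) 1 ∧
    (x, s) ∈ {p : ℝ × ℝ | p.1 ≤ p.2} ∧ ⟪G x, G 0 + G s⟫ ≤ 0} with hAdef
  set B := {s : ℝ | ∃ x ∈ Set.Icc (0:ℝ) 1, s ∈ Set.Icc (0:ℝ) 1 ∧
    (x, s) ∈ {p : ℝ × ℝ | p.2 ≤ p.1} ∧ ⟪G x, G 0 + G s⟫ ≤ 0} with hBdef
  have h0 : (0:ℝ) ∈ Set.Icc (0:ℝ) 1 := by simp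
  have h1 : (1:ℝ) ∈ Set.Icc (0:ℝ) 1 := by simp
  have hG01 : G 1 = G 0 := by rw [hGγ 0 h0, hGγ 1 h1, hclosed]
  have hpos : 0 < ⟪G 0, G 0 + G 0⟫ := by
    rw [inner_add_right, real_inner_self_eq_norm_sq, hGγ 0 h0, hsphere 0 h0]
    norm_num
  have h0A : (0:ℝ) ∉ A := by
    rintro ⟨x, hx, -, hxs, h⟩
    have hx0 : x = 0 := le_antisymm hxs hx.1
    subst hx0
    linarith
  have h1B : (1:ℝ) ∉ B := by
    rintro ⟨x, hx, -, hxs, h⟩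
    have hx1 : x = 1 := le_antisymm hx.2 hxs
    subst hx1
    rw [hG01] at h
    linarith
  have hdisj : ∀ s, s ∈ A → s ∉ B := by
    rintro s ⟨x, hx, hs, hxs, h⟩ ⟨y, hy, -, hsy, h'⟩
    have hxs' : x ≤ s := hxs
    have hsy' : s ≤ y := hsy
    have hl := hlen 4 (fun k => match k with | 0 => 0 | 1 => x | 2 => s | 3 => y | _ => 1)
      rfl rfl (by
        intro k hk
        interval_cases k
        exacts [hx.1, hxs', hsy', hy.2])
    simp only [Finset.sum_range_succ, Finset.sum_range_zero, zero_add] at hl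
    rw [hGγ x hx, hGγ 0 h0, hGγ s hs, inner_add_right, real_inner_comm] at h
    rw [hGγ y hy, hGγ 0 h0, hGγ s hs, inner_add_right, real_inner_comm (γ s), hclosed] at h'
    have := pi_le_arccos_add_arccos h
    have := pi_le_arccos_add_arccos h'
    linarith
  obtain ⟨s, hs, hsA, hsB⟩ : ∃ s ∈ Set.Icc (0:ℝ) 1, s ∉ A ∧ s ∉ B := by
    by_contra! hcon
    have hcov : Set.Icc (0:ℝ) 1 ⊆ A ∪ B := fun s hs => by
      by_cases hsA : s ∈ A
      · exact Or.inl hsA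
      · exact Or.inr (hcon s hs hsA)
    obtain ⟨s, -, hsA, hsB⟩ := isPreconnected_closed_iff.1 isPreconnected_Icc A B hA hB hcov
      ⟨1, h1, (hcov h1).resolve_right h1B⟩ ⟨0, h0, (hcov h0).resolve_left h0A⟩
    exact hdisj s hsA hsB
  have key : ∀ u ∈ Set.Icc (0:ℝ) 1, 0 < ⟪γ u, G 0 + G s⟫ := by
    intro u hu
    rw [← hGγ u hu]
    by_contra! hle
    rcases le_total u s with h | h
    · exact hsA ⟨u, hu, hs, h, hle⟩
    · exact hsB ⟨u, hu, hs, h, hle⟩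
  have hne : G 0 + G s ≠ 0 := by
    intro h
    have := key 0 h0
    rw [h, inner_zero_right] at this
    exact lt_irrefl _ this
  refine ⟨‖G 0 + G s‖⁻¹ • (G 0 + G s), norm_smul_inv_norm hne, fun u hu => ?_⟩
  rw [inner_smul_right]
  exact mul_pos (inv_pos.2 (norm_pos_iff.2 hne)) (key u hu)
end

section
/- Let U ⊆ ℂ be an open set containing the closed unit disk, let P be a finite subset of the open unit disk D = {z : |z| < 1}, and let f : U ∖ P → ℂ be holomorphic such that |f(z)| → ∞ as z → p for every p ∈ P; for p ∈ P let m_p ≥ 1 denote the order of the pole of f at p. Then ∫_{D ∖ P} 4·|f′(z)|²/(1 + |f(z)|²)² dA(z) = 4π·Σ_{p∈P} m_p + 2·Im( ∮_{|z|=1} ( conj(f(z))·f′(z) )/(1 + |f(z)|²) dz ), where dA is two-dimensional Lebesgue measure and the circle integral is taken counterclockwise; in particular the left-hand integral is finite. -/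
open Real MeasureTheory Filter Metric Topology

/-!
Write `f = h / q` on `U ∖ P`, where `q = ∏ (z - p) ^ m p` and `h` is holomorphic on all of `U` and
does not vanish on `P` (`exists_numerator`: removable singularities, and minimality of `m p`).
Then `q` and `h` have no common zero, so
`W = (q̄ q' + h̄ h') / (|q|² + |h|²) = ∂ log (|q|² + |h|²)`
is smooth on `U`, and since `1 + |f|² = (|q|² + |h|²) / |q|²`,
`f̄ f' / (1 + |f|²) = W - q'/q` off the poles.  By Lagrange's identity
`∂̄W = |h' q - h q'|² / (|q|² + |h|²)²`, which equals `|f'|² / (1 + |f|²)²` off the poles; this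
is continuous on the closed disk, whence the integrability.

Green's formula `∮ W dz = 2 i ∬ ∂̄W dA` on the disk (`green_disk`) expresses the area as
`2 Im ∮ W dz`, and `∮ q'/q dz = 2 π i ∑ m p` accounts for the poles.  Green's formula itself is the
divergence theorem on the rectangle `[0, 1] × [-π, π]` in polar coordinates.
-/

/-- `F` is real differentiable at `z` with `dF = a dz + b dz̄`; that is, `a` and `b` are the
Wirtinger derivatives `∂F/∂z` and `∂F/∂z̄` at `z`. -/
def HasWirtinger (F : ℂ → ℂ) (a b z : ℂ) : Prop :=
  HasFDerivAt F (a • (1 : ℂ →L[ℝ] ℂ) + b • (Complex.conjCLE : ℂ →L[ℝ] ℂ)) z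

namespace HasWirtinger

variable {F G : ℂ → ℂ} {a b c d z : ℂ}

lemma congr_right (h : HasWirtinger F a b z) (e : b = c) : HasWirtinger F a c z := e ▸ h

lemma of_hasDerivAt (h : HasDerivAt F a z) : HasWirtinger F a 0 z := by
  have := h.hasFDerivAt.restrictScalars ℝ
  refine this.congr_fderiv ?_
  ext
  simp [mul_comm]

lemma conj (h : HasWirtinger F a b z) :
    HasWirtinger (fun w => starRingEnd ℂ (F w)) (starRingEnd ℂ b) (starRingEnd ℂ a) z := by
  have := (Complex.conjCLE : ℂ →L[ℝ] ℂ).hasFDerivAt.comp z h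
  refine this.congr_fderiv ?_
  ext
  simp [add_comm]

lemma add (hF : HasWirtinger F a b z) (hG : HasWirtinger G c d z) :
    HasWirtinger (fun w => F w + G w) (a + c) (b + d) z := by
  refine (HasFDerivAt.add hF hG).congr_fderiv ?_
  ext
  simp
  ring

lemma mul (hF : HasWirtinger F a b z) (hG : HasWirtinger G c d z) :
    HasWirtinger (fun w => F w * G w) (F z * c + G z * a) (F z * d + G z * b) z := by
  refine (HasFDerivAt.mul hF hG).congr_fderiv ?_
  ext
  simp
  ring

lemma inv (hF : HasWirtinger F a b z) (h0 : F z ≠ 0) :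
    HasWirtinger (fun w => (F w)⁻¹) (-a / F z ^ 2) (-b / F z ^ 2) z := by
  have h1 := (hasDerivAt_inv h0).hasFDerivAt.restrictScalars ℝ
  refine (HasFDerivAt.comp z h1 hF).congr_fderiv ?_
  ext
  simp
  ring

end HasWirtinger

theorem integral_ball_eq_polar (b : ℂ → ℂ) (hb : ContinuousOn b (closedBall 0 1)) :
    ∫ z in ball (0:ℂ) 1, b z =
      ∫ r in (0:ℝ)..1, ∫ θ in (-π)..π, (r : ℂ) * b (r * Complex.exp (θ * Complex.I)) := by
  rw [← integral_indicator measurableSet_ball, ← Complex.integral_comp_polarCoord_symm]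
  have e1 : ∀ p ∈ polarCoord.target, p.1 • (ball (0:ℂ) 1).indicator b (Complex.polarCoord.symm p)
      = (Set.Iio (1:ℝ) ×ˢ (Set.univ : Set ℝ)).indicator
        (fun p : ℝ × ℝ => (p.1 : ℂ) * b (p.1 * Complex.exp (p.2 * Complex.I))) p := by
    rintro ⟨r, θ⟩ ⟨hr, -⟩
    have hr : 0 < r := hr
    have e : Complex.polarCoord.symm (r, θ) = r * Complex.exp (θ * Complex.I) := by
      rw [Complex.polarCoord_symm_apply, Complex.exp_mul_I]; simp
    have hm : (r * Complex.exp (θ * Complex.I) ∈ ball (0:ℂ) 1) ↔ r < 1 := by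
      simp [Complex.norm_exp_ofReal_mul_I, abs_of_pos hr]
    rw [e]
    by_cases h : r < 1
    · rw [Set.indicator_of_mem (hm.2 h), Set.indicator_of_mem (by simpa using h)]; simp
    · rw [Set.indicator_of_notMem (fun h' => h (hm.1 h')),
        Set.indicator_of_notMem (by simpa using h)]; simp
  rw [setIntegral_congr_fun polarCoord.open_target.measurableSet e1,
    setIntegral_indicator (measurableSet_Iio.prod MeasurableSet.univ)]
  have e2 : polarCoord.target ∩ Set.Iio (1:ℝ) ×ˢ (Set.univ : Set ℝ)
      = Set.Ioo 0 1 ×ˢ Set.Ioo (-π) π := by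
    ext ⟨r, θ⟩; simp [polarCoord_target]; tauto
  rw [e2, Measure.volume_eq_prod, setIntegral_prod]
  · rw [intervalIntegral.integral_of_le zero_le_one, integral_Ioc_eq_integral_Ioo]
    refine setIntegral_congr_fun measurableSet_Ioo fun r _ => ?_
    simp only
    rw [intervalIntegral.integral_of_le (by linarith [pi_pos]), integral_Ioc_eq_integral_Ioo]
  · have hc : ContinuousOn (fun p : ℝ × ℝ => (p.1 : ℂ) * b (p.1 * Complex.exp (p.2 * Complex.I)))
        (Set.Icc 0 1 ×ˢ Set.Icc (-π) π) := by
      refine (by fun_prop : Continuous fun p : ℝ × ℝ => (p.1 : ℂ)).continuousOn.mul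
        (hb.comp (by fun_prop) ?_)
      rintro ⟨r, θ⟩ ⟨⟨h0, h1⟩, -⟩
      simpa [Complex.norm_exp_ofReal_mul_I, abs_of_nonneg h0] using h1
    exact (hc.integrableOn_compact (isCompact_Icc.prod isCompact_Icc)).mono_set
      (Set.prod_mono Set.Ioo_subset_Icc_self Set.Ioo_subset_Icc_self)

/-- **Green's formula on the unit disk**, `∮ W dz = 2 i ∬ ∂̄W dA`. With `z = r e^{iθ}` it follows
from `2 i r ∂̄W = ∂_r (i r e^{iθ} W) - ∂_θ (e^{iθ} W)`, since the `θ`-boundary terms cancel by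
periodicity and the one at `r = 0` vanishes. Only `∂̄W` has to be continuous. -/
theorem green_disk (W a b : ℂ → ℂ) (hW : ∀ z ∈ closedBall (0:ℂ) 1, HasWirtinger W (a z) (b z) z)
    (hb : ContinuousOn b (closedBall 0 1)) :
    (∮ z in C(0, 1), W z) = 2 * Complex.I * ∫ z in ball (0:ℂ) 1, b z := by
  set Φ : ℝ × ℝ → ℂ := fun p => p.1 * Complex.exp (p.2 * Complex.I) with hΦ
  set R : ℝ × ℝ →L[ℝ] ℂ := Complex.ofRealCLM.comp (ContinuousLinearMap.fst ℝ ℝ ℝ)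
  set T : ℝ × ℝ →L[ℝ] ℂ := Complex.ofRealCLM.comp (ContinuousLinearMap.snd ℝ ℝ ℝ)
  set E : ℝ × ℝ → ℂ := fun p => Complex.exp (p.2 * Complex.I) with hE
  have hE' : ∀ p, HasFDerivAt E ((Complex.I * E p) • T) p := by
    intro p
    have h1 : HasFDerivAt (fun p : ℝ × ℝ => (p.2 : ℂ) * Complex.I) (Complex.I • T) p := by
      have := (T.hasFDerivAt (x := p)).mul_const Complex.I
      exact this
    refine h1.cexp.congr_fderiv ?_
    rw [smul_smul, mul_comm]
  have hΦ' : ∀ p, HasFDerivAt Φ (E p • R + (Complex.I * Φ p) • T) p := by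
    intro p
    refine (HasFDerivAt.mul (R.hasFDerivAt (x := p)) (hE' p)).congr_fderiv ?_
    ext <;> simp [hΦ, hE, R, T]
    ring
  have hmem : ∀ p ∈ Set.Icc (0:ℝ) 1 ×ˢ Set.Icc (-π) π, Φ p ∈ closedBall (0:ℂ) 1 := by
    rintro ⟨r, θ⟩ ⟨⟨h0, h1⟩, -⟩
    simpa [hΦ, Complex.norm_exp_ofReal_mul_I, abs_of_nonneg h0] using h1
  have hWΦ : ∀ p ∈ Set.Icc (0:ℝ) 1 ×ˢ Set.Icc (-π) π, HasFDerivAt (fun p => W (Φ p)) _ p :=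
    fun p hp => HasFDerivAt.comp p (hW _ (hmem p hp)) (hΦ' p)
  set W' : ℝ × ℝ → ℝ × ℝ →L[ℝ] ℂ := fun p =>
    (a (Φ p) • (1 : ℂ →L[ℝ] ℂ) + b (Φ p) • (Complex.conjCLE : ℂ →L[ℝ] ℂ)).comp
      (E p • R + (Complex.I * Φ p) • T) with hW'
  set F' : ℝ × ℝ → ℝ × ℝ →L[ℝ] ℂ := fun p =>
    (Complex.I * Φ p) • W' p + W (Φ p) • Complex.I • (E p • R + (Complex.I * Φ p) • T) with hF'
  set G' : ℝ × ℝ → ℝ × ℝ →L[ℝ] ℂ := fun p =>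
    -(E p • W' p + W (Φ p) • (Complex.I * E p) • T) with hG'
  have hF : ∀ p ∈ Set.Icc (0:ℝ) 1 ×ˢ Set.Icc (-π) π,
      HasFDerivAt (fun p => Complex.I * Φ p * W (Φ p)) (F' p) p :=
    fun p hp => HasFDerivAt.mul (HasFDerivAt.const_mul (hΦ' p) Complex.I) (hWΦ p hp)
  have hG : ∀ p ∈ Set.Icc (0:ℝ) 1 ×ˢ Set.Icc (-π) π,
      HasFDerivAt (fun p => -(E p * W (Φ p))) (G' p) p :=
    fun p hp => (HasFDerivAt.mul (hE' p) (hWΦ p hp)).neg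
  have hpi : -π ≤ π := by linarith [pi_pos]
  have key : ∀ p, F' p (1, 0) + G' p (0, 1) = 2 * Complex.I * ((p.1 : ℂ) * b (Φ p)) := by
    intro p
    have hEE : E p * starRingEnd ℂ (E p) = 1 := by
      rw [Complex.mul_conj, Complex.normSq_eq_norm_sq, hE]
      simp [Complex.norm_exp_ofReal_mul_I]
    have hΦE : Φ p = p.1 * E p := rfl
    simp only [hF', hG', hW', R, T]
    simp [hΦE]
    generalize W _ = w at *
    linear_combination (2 * Complex.I * p.1 * b (p.1 * E p)) * hEE
  have hsub : Set.Ioo (min 0 1) (max (0:ℝ) 1) ×ˢ Set.Ioo (min (-π) π) (max (-π) π) ⊆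
      Set.Icc (0:ℝ) 1 ×ˢ Set.Icc (-π) π := by
    rw [min_eq_left zero_le_one, max_eq_right zero_le_one, min_eq_left hpi, max_eq_right hpi]
    exact Set.prod_mono Set.Ioo_subset_Icc_self Set.Ioo_subset_Icc_self
  have D := integral2_divergence_prod_of_hasFDerivAt _ _ F' G' 0 (-π) 1 π
    (by rw [Set.uIcc_of_le zero_le_one, Set.uIcc_of_le hpi]
        exact fun p hp => (hF p hp).continuousAt.continuousWithinAt)
    (by rw [Set.uIcc_of_le zero_le_one, Set.uIcc_of_le hpi]
        exact fun p hp => (hG p hp).continuousAt.continuousWithinAt)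
    (fun p hp => hF p (hsub hp)) (fun p hp => hG p (hsub hp))
    (by
      rw [Set.uIcc_of_le zero_le_one, Set.uIcc_of_le hpi, funext key]
      refine ContinuousOn.integrableOn_compact (isCompact_Icc.prod isCompact_Icc) ?_
      exact continuousOn_const.mul
        ((by fun_prop : Continuous fun p : ℝ × ℝ => (p.1 : ℂ)).continuousOn.mul
        (hb.comp (by fun_prop) hmem)))
  simp only [key, intervalIntegral.integral_const_mul] at D
  rw [integral_ball_eq_polar b hb]
  have hper : Function.Periodic (fun θ : ℝ => deriv (circleMap 0 1) θ • W (circleMap 0 1 θ))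
      (2 * π) := fun θ => by
    simp [periodic_circleMap 0 1 θ]
  have h2 := hper.intervalIntegral_add_eq 0 (-π)
  rw [zero_add, show -π + 2 * π = π by ring] at h2
  rw [circleIntegral, h2]
  have hEpi : Complex.exp (-(π * Complex.I)) = Complex.exp (π * Complex.I) := by
    rw [Complex.exp_neg, Complex.exp_pi_mul_I]; norm_num
  simp only [intervalIntegral.integral_const_mul]
  rw [D]
  simp [hΦ, hE, circleMap, hEpi, mul_comm Complex.I]

/-- A function with poles of order `m p` at the points of `P` is `h / ∏ (z - p) ^ m p` with `h`
holomorphic across `P` and nonzero there. -/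
theorem exists_numerator (U : Set ℂ) (hU : IsOpen U)
    (P : Finset ℂ) (hPU : ↑P ⊆ U)
    (f : ℂ → ℂ) (hf : DifferentiableOn ℂ f (U \ ↑P))
    (hpole : ∀ p ∈ P, Tendsto (fun z => ‖f z‖) (𝓝[≠] p) atTop)
    (m : ℂ → ℕ)
    (hm : ∀ p ∈ P, IsLeast
      {k : ℕ | 0 < k ∧ ∃ C : ℝ, ∀ᶠ z in 𝓝[≠] p, ‖(z - p) ^ k * f z‖ ≤ C} (m p)) :
    ∃ h : ℂ → ℂ, DifferentiableOn ℂ h U ∧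
      (∀ z ∈ U \ ↑P, h z = (∏ p ∈ P, (z - p) ^ m p) * f z) ∧ ∀ p ∈ P, h p ≠ 0 := by
  classical
  set g : ℂ → ℂ := fun z => (∏ p ∈ P, (z - p) ^ m p) * f z with hg
  have hopen : IsOpen (U \ (P : Set ℂ)) := hU.sdiff P.finite_toSet.isClosed
  have hgd : DifferentiableOn ℂ g (U \ ↑P) :=
    (by fun_prop : Differentiable ℂ fun z => ∏ p ∈ P, (z - p) ^ m p).differentiableOn.mul hf
  set h : ℂ → ℂ := fun z => if z ∈ P then limUnder (𝓝[≠] z) g else g z with hh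
  have hhg : ∀ z ∉ P, h z = g z := fun z hz => if_neg hz
  have hev : ∀ p ∈ P, ∀ᶠ z in 𝓝[≠] p, z ∈ U \ (P : Set ℂ) := by
    intro p hp
    have h1 : ∀ᶠ z in 𝓝[≠] p, z ∈ U := nhdsWithin_le_nhds (hU.mem_nhds (hPU hp))
    have h2 : ∀ᶠ z in 𝓝 p, z ∉ (P.erase p : Set ℂ) :=
      (P.erase p).finite_toSet.isClosed.isOpen_compl.mem_nhds (by simp)
    filter_upwards [h1, nhdsWithin_le_nhds h2, self_mem_nhdsWithin] with z hz hz2 hz3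
    refine ⟨hz, fun hzP => hz2 ?_⟩
    simpa [hzP] using hz3
  have hsplit : ∀ p ∈ P, ∀ z,
      (∏ x ∈ P, (z - x) ^ m x) = (z - p) ^ m p * ∏ x ∈ P.erase p, (z - x) ^ m x :=
    fun p hp z => (Finset.mul_prod_erase P _ hp).symm
  have hdp : ∀ p ∈ P, DifferentiableAt ℂ h p := by
    intro p hp
    obtain ⟨⟨-, C, hC⟩, -⟩ := hm p hp
    have hR : Continuous fun z => ∏ x ∈ P.erase p, (z - x) ^ m x := by fun_prop
    have hRb : ∀ᶠ z in 𝓝[≠] p, ‖∏ x ∈ P.erase p, (z - x) ^ m x‖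
        ≤ ‖∏ x ∈ P.erase p, (p - x) ^ m x‖ + 1 :=
      nhdsWithin_le_nhds ((hR.norm.continuousAt.eventually_lt continuousAt_const
        (lt_add_one _)).mono fun z hz => hz.le)
    have hb : ∃ K, ∀ᶠ z in 𝓝[≠] p, ‖g z‖ ≤ K := by
      refine ⟨C * (‖∏ x ∈ P.erase p, (p - x) ^ m x‖ + 1), ?_⟩
      filter_upwards [hC, hRb] with z h1 h2
      have : g z = ((z - p) ^ m p * f z) * ∏ x ∈ P.erase p, (z - x) ^ m x := by
        simp only [hg, hsplit p hp z]; ring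
      rw [this, norm_mul]
      exact mul_le_mul h1 h2 (norm_nonneg _) ((norm_nonneg _).trans h1)
    obtain ⟨K, hK⟩ := hb
    obtain ⟨s, hs, hsub⟩ := mem_nhdsWithin_iff_exists_mem_nhds_inter.1 (hK.and (hev p hp))
    have hU1 := Complex.differentiableOn_update_limUnder_of_bddAbove hs
      (fun z hz => (hgd.differentiableAt (hopen.mem_nhds (hsub hz).2)).differentiableWithinAt)
      ⟨K, by rintro _ ⟨z, hz, rfl⟩; exact (hsub hz).1⟩
    refine (hU1.differentiableAt hs).congr_of_eventuallyEq ?_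
    filter_upwards [hs] with z hz
    by_cases hzp : z = p
    · subst hzp; simp [hh, hp]
    · rw [Function.update_of_ne hzp]
      exact hhg z fun hzP => (hsub ⟨hz, hzp⟩).2.2 hzP
  refine ⟨h, fun z hz => ?_, fun z hz => hhg z hz.2, fun p hp h0 => ?_⟩
  · by_cases hzP : z ∈ P
    · exact (hdp z hzP).differentiableWithinAt
    · refine ((hgd.differentiableAt (hopen.mem_nhds ⟨hz, hzP⟩)).congr_of_eventuallyEq
        ?_).differentiableWithinAt
      filter_upwards [hopen.mem_nhds ⟨hz, hzP⟩] with w hw using hhg w hw.2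
  · -- a zero of `h` at `p` would lower the order of the pole by one
    obtain ⟨C, hC⟩ := (hdp p hp).hasDerivAt.isBigO_sub.bound
    set c := ‖∏ x ∈ P.erase p, (p - x) ^ m x‖ with hc
    have hcpos : 0 < c := by
      rw [hc, norm_pos_iff, Finset.prod_ne_zero_iff]
      intro x hx
      exact pow_ne_zero _ (sub_ne_zero.2 (Finset.ne_of_mem_erase hx).symm)
    have hR : Continuous fun z => ∏ x ∈ P.erase p, (z - x) ^ m x := by fun_prop
    have hRb : ∀ᶠ z in 𝓝 p, c / 2 < ‖∏ x ∈ P.erase p, (z - x) ^ m x‖ :=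
      continuousAt_const.eventually_lt hR.norm.continuousAt (by simp only [← hc]; linarith)
    have hmpos : 0 < m p := (hm p hp).1.1
    have hbd : ∀ᶠ z in 𝓝[≠] p, ‖(z - p) ^ (m p - 1) * f z‖ ≤ C / (c / 2) := by
      filter_upwards [nhdsWithin_le_nhds hC, nhdsWithin_le_nhds hRb, hev p hp,
        self_mem_nhdsWithin] with z h1 h2 h3 h4
      have hzp : 0 < ‖z - p‖ := norm_pos_iff.2 (sub_ne_zero.2 h4)
      have e : h z = (z - p) * ((z - p) ^ (m p - 1) * f z) *
          ∏ x ∈ P.erase p, (z - x) ^ m x := by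
        rw [hhg z h3.2]
        simp only [hg, hsplit p hp z]
        obtain ⟨k, hk⟩ := Nat.exists_eq_succ_of_ne_zero hmpos.ne'
        rw [hk, Nat.succ_sub_one, pow_succ]; ring
      rw [h0, sub_zero, e, norm_mul, norm_mul, mul_assoc, mul_comm C] at h1
      rw [le_div_iff₀ (by positivity)]
      refine le_trans ?_ (le_of_mul_le_mul_left h1 hzp)
      gcongr
    -- for `m p = 1` exponent `0` is excluded from the set in `hm`; there `hpole` is violated instead
    rcases Nat.eq_zero_or_pos (m p - 1) with h1 | h1
    · simp only [h1, pow_zero, one_mul] at hbd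
      obtain ⟨z, hz1, hz2⟩ := (hbd.and ((hpole p hp).eventually_gt_atTop (C / (c / 2)))).exists
      exact absurd hz1 (not_le.2 hz2)
    · have := (hm p hp).2 ⟨h1, _, hbd⟩
      omega


/-- **Area formula (Lemma `Al`).** Let `f` be holomorphic on an open set `U` containing
the closed unit disk, except for poles at the points of a finite set `P` inside the open
unit disk, the pole at `p ∈ P` having order `m p` (the least positive integer `k` such
that `(z−p)^k f(z)` is bounded near `p`).  Then the spherical area integrand
`4|f′|²/(1+|f|²)²` is integrable on the disk minus `P`, and its integral equals
`4π ∑_{p∈P} m p + 2 Im ∮_{|z|=1} (conj f)·f′/(1+|f|²) dz`. -/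
theorem stmt_14 (U : Set ℂ) (hU : IsOpen U) (hDU : closedBall (0:ℂ) 1 ⊆ U)
    (P : Finset ℂ) (hP : ↑P ⊆ ball (0:ℂ) 1)
    (f : ℂ → ℂ) (hf : DifferentiableOn ℂ f (U \ ↑P))
    (hpole : ∀ p ∈ P, Tendsto (fun z => ‖f z‖) (𝓝[≠] p) atTop)
    (m : ℂ → ℕ)
    (hm : ∀ p ∈ P, IsLeast
      {k : ℕ | 0 < k ∧ ∃ C : ℝ, ∀ᶠ z in 𝓝[≠] p, ‖(z - p) ^ k * f z‖ ≤ C} (m p)) :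
    IntegrableOn (fun z => 4 * ‖deriv f z‖ ^ 2 / (1 + ‖f z‖ ^ 2) ^ 2)
      (ball (0:ℂ) 1 \ ↑P) volume ∧
    ∫ z in ball (0:ℂ) 1 \ ↑P, 4 * ‖deriv f z‖ ^ 2 / (1 + ‖f z‖ ^ 2) ^ 2 ∂volume
      = 4 * π * (∑ p ∈ P, (m p : ℝ)) +
        2 * (∮ z in C(0, 1),
              (starRingEnd ℂ) (f z) * deriv f z / (1 + (‖f z‖ : ℂ) ^ 2)).im := by
  classical
  have hPU : (P : Set ℂ) ⊆ U := hP.trans (ball_subset_closedBall.trans hDU)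
  obtain ⟨h, hhd, hhf, hh0⟩ := exists_numerator U hU P hPU f hf hpole m hm
  set q : ℂ → ℂ := fun z => ∏ p ∈ P, (z - p) ^ m p with hq
  have hqd : Differentiable ℂ q := by fun_prop
  have hq0 : ∀ z ∉ P, q z ≠ 0 := fun z hz => Finset.prod_ne_zero_iff.2 fun x hx =>
    pow_ne_zero _ (sub_ne_zero.2 fun e => hz (e ▸ hx))
  have hopen : IsOpen (U \ (P : Set ℂ)) := hU.sdiff P.finite_toSet.isClosed
  set D : ℂ → ℝ := fun z => ‖q z‖ ^ 2 + ‖h z‖ ^ 2 with hD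
  have hDpos : ∀ z, z ∈ U → 0 < D z := by
    intro z hz
    by_cases hzP : z ∈ P
    · have := norm_pos_iff.2 (hh0 z hzP); simp only [hD]; positivity
    · have := norm_pos_iff.2 (hq0 z hzP); simp only [hD]; positivity
  have hDc : ∀ z, (starRingEnd ℂ (q z) * q z + starRingEnd ℂ (h z) * h z) = (D z : ℂ) := by
    intro z
    simp [hD, Complex.conj_mul']
  -- the Wronskian of `q` and `h`, equal to `q² f'` off the poles
  set w : ℂ → ℂ := fun z => deriv h z * q z - h z * deriv q z with hw
  set β : ℂ → ℝ := fun z => ‖w z‖ ^ 2 / D z ^ 2 with hβ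
  set W : ℂ → ℂ := fun z => (starRingEnd ℂ (q z) * deriv q z + starRingEnd ℂ (h z) * deriv h z) *
    (starRingEnd ℂ (q z) * q z + starRingEnd ℂ (h z) * h z)⁻¹ with hW
  -- `∂̄W = β`, by Lagrange's identity
  have hWd : ∀ z ∈ U, ∃ a, HasWirtinger W a (β z) z := by
    intro z hz
    have Hq := HasWirtinger.of_hasDerivAt (hqd z).hasDerivAt
    have Hh := HasWirtinger.of_hasDerivAt (hhd.differentiableAt (hU.mem_nhds hz)).hasDerivAt
    have Hq' := HasWirtinger.of_hasDerivAt
      (hqd.differentiableOn.deriv hU |>.differentiableAt (hU.mem_nhds hz)).hasDerivAt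
    have Hh' := HasWirtinger.of_hasDerivAt
      (hhd.deriv hU |>.differentiableAt (hU.mem_nhds hz)).hasDerivAt
    have hne : starRingEnd ℂ (q z) * q z + starRingEnd ℂ (h z) * h z ≠ 0 := by
      rw [hDc]; exact_mod_cast (hDpos z hz).ne'
    have H := ((Hq.conj.mul Hq').add (Hh.conj.mul Hh')).mul
      (((Hq.conj.mul Hq).add (Hh.conj.mul Hh)).inv hne)
    refine ⟨_, H.congr_right ?_⟩
    have hβc : (β z : ℂ) = starRingEnd ℂ (w z) * w z /
        (starRingEnd ℂ (q z) * q z + starRingEnd ℂ (h z) * h z) ^ 2 := by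
      rw [hDc, Complex.conj_mul']; simp [hβ]
    rw [hβc]
    simp only [hw, map_sub, map_mul]
    field_simp
    ring
  have hβcont : ContinuousOn β U := by
    have c1 := hhd.continuousOn
    have c2 := (hhd.deriv hU).continuousOn
    have c3 := hqd.continuous.continuousOn (s := U)
    have c4 := (hqd.differentiableOn.deriv hU).continuousOn
    refine ContinuousOn.div (by fun_prop) (by fun_prop) fun z hz => ?_
    exact (pow_pos (hDpos z hz) 2).ne'
  -- off the poles `f = h / q`
  have hfq : ∀ z ∈ U \ (P : Set ℂ), f z = h z / q z := by
    intro z hz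
    rw [hhf z hz, mul_div_cancel_left₀ _ (hq0 z hz.2)]
  have hf' : ∀ z ∈ U \ (P : Set ℂ), deriv f z = w z / q z ^ 2 := by
    intro z hz
    have e : f =ᶠ[𝓝 z] fun z => h z / q z := by
      filter_upwards [hopen.mem_nhds hz] with y hy using hfq y hy
    rw [e.deriv_eq]
    exact ((hhd.differentiableAt (hU.mem_nhds hz.1)).hasDerivAt.div (hqd z).hasDerivAt
      (hq0 z hz.2)).deriv
  have hint : ∀ z ∈ U \ (P : Set ℂ),
      4 * ‖deriv f z‖ ^ 2 / (1 + ‖f z‖ ^ 2) ^ 2 = 4 * β z := by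
    intro z hz
    have h1 := norm_pos_iff.2 (hq0 z hz.2)
    have h2 := hDpos z hz.1
    rw [hf' z hz, hfq z hz]
    simp only [hβ, hD, norm_div, norm_pow] at h2 ⊢
    field_simp
  have hsub : ball (0:ℂ) 1 \ (P : Set ℂ) ⊆ U \ (P : Set ℂ) :=
    Set.sdiff_subset_sdiff_left (ball_subset_closedBall.trans hDU)
  have hmeas : MeasurableSet (ball (0:ℂ) 1 \ (P : Set ℂ)) :=
    measurableSet_ball.diff P.finite_toSet.measurableSet
  have hβint : IntegrableOn (fun z => 4 * β z) (ball (0:ℂ) 1) volume :=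
    ((continuousOn_const.mul (hβcont.mono hDU)).integrableOn_compact
      (isCompact_closedBall 0 1)).mono_set ball_subset_closedBall
  refine ⟨(hβint.mono_set Set.sdiff_subset).congr_fun
    (fun z hz => (hint z (hsub hz)).symm) hmeas, ?_⟩
  rw [setIntegral_congr_fun hmeas fun z hz => hint z (hsub hz),
    setIntegral_congr_set (sdiff_null_ae_eq_self (P.finite_toSet.measure_zero volume))]
  choose! a ha using hWd
  have G := green_disk W a (fun z => (β z : ℂ)) (fun z hz => ha z (hDU hz))
    (Complex.continuous_ofReal.comp_continuousOn (hβcont.mono hDU))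
  have hsphere : sphere (0:ℂ) 1 ⊆ U \ (P : Set ℂ) := fun z hz =>
    ⟨hDU (sphere_subset_closedBall hz), fun hzP => by
      have h1 := hP hzP
      rw [mem_ball] at h1; rw [mem_sphere] at hz; linarith⟩
  have hWc : ContinuousOn W (sphere 0 1) := fun z hz =>
    (HasFDerivAt.continuousAt (ha z (hsphere hz).1)).continuousWithinAt
  have hpc : ∀ p ∈ P, ContinuousOn (fun z : ℂ => (m p : ℂ) * (z - p)⁻¹) (sphere 0 1) :=
    fun p hp => continuousOn_const.mul (ContinuousOn.inv₀ (by fun_prop) fun z hz =>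
      sub_ne_zero.2 fun e => (hsphere hz).2 (e ▸ hp))
  -- on the circle `f̄ f' / (1 + |f|²) = W - q'/q`
  have hω : Set.EqOn (fun z => (starRingEnd ℂ) (f z) * deriv f z / (1 + (‖f z‖ : ℂ) ^ 2))
      (fun z => W z - ∑ p ∈ P, (m p : ℂ) * (z - p)⁻¹) (sphere 0 1) := by
    intro z hz
    have hz' := hsphere hz
    have hqz := hq0 z hz'.2
    have hlog : ∑ p ∈ P, (m p : ℂ) * (z - p)⁻¹ = deriv q z / q z := by
      rw [← logDeriv_apply, hq, logDeriv_prod]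
      · refine Finset.sum_congr rfl fun p hp => ?_
        rw [logDeriv_fun_pow (by fun_prop), logDeriv_apply]
        simp
      · exact fun p hp => pow_ne_zero _ (sub_ne_zero.2 fun e => hz'.2 (e ▸ hp))
      · exact fun p hp => by fun_prop
    have hne : starRingEnd ℂ (q z) * q z + starRingEnd ℂ (h z) * h z ≠ 0 := by
      rw [hDc]; exact_mod_cast (hDpos z hz'.1).ne'
    have hqc : starRingEnd ℂ (q z) ≠ 0 := by simpa using hqz
    simp only [hlog, hW]
    rw [← Complex.conj_mul', hf' z hz', hfq z hz', map_div₀]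
    have hne' : 1 + starRingEnd ℂ (h z) / starRingEnd ℂ (q z) * (h z / q z) =
      (starRingEnd ℂ (q z) * q z + starRingEnd ℂ (h z) * h z) /
        (starRingEnd ℂ (q z) * q z) := by field_simp
    rw [hne']
    simp only [hw]
    field_simp
    ring
  rw [circleIntegral.integral_congr zero_le_one hω, circleIntegral.integral_sub
    (hWc.circleIntegrable zero_le_one)
    ((continuousOn_finsetSum _ hpc).circleIntegrable zero_le_one),
    circleIntegral.integral_fun_sum fun p hp => (hpc p hp).circleIntegrable zero_le_one, G,
    integral_complex_ofReal, integral_const_mul]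
  have hres : ∑ p ∈ P, (∮ z in C(0, 1), (m p : ℂ) * (z - p)⁻¹) =
      ((2 * π * ∑ p ∈ P, (m p : ℝ) : ℝ) : ℂ) * Complex.I := by
    push_cast
    rw [Finset.mul_sum, Finset.sum_mul]
    refine Finset.sum_congr rfl fun p hp => ?_
    rw [circleIntegral.integral_const_mul, circleIntegral.integral_sub_inv_of_mem_ball (hP hp)]
    ring
  rw [hres]
  simp
  ring
end
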